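/- arXiv:1901.10929 — 8 statements merged into one kernel-verified Lean document; each statement's English description precedes it below -/
import Mathlib

section
/- Let r ≥ 1 and let v₁, …, v_k (k ≥ 2) be an r-modular sequence, with ε_i and a_i as defined. If j is an index such that the Euclidean norm of v_j is maximal among all v₁, …, v_k (i.e. ‖v_i‖ ≤ ‖v_j‖ for all i), then a_j ∈ {0, 1, −1}. -/
/-!
The vectors `x = ε_{j-1} v_{j-1}` and `y = ε_j v_{j+1}` have norm at most `‖v_j‖` and satisfy
`x + y = -a_j v_j`. If `|a_j| ≥ 2`, the parallelogram law
`‖x + y‖² + ‖x - y‖² = 2 ‖x‖² + 2 ‖y‖²` leaves no room for `x - y`: hence `x = y`, and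
`2 ε_j v_{j+1} = -a_j v_j` contradicts the linear independence of `v_j` and `v_{j+1}`.
-/

/-- det(u,v) = u₁v₂ − u₂v₁ for u, v ∈ ℤ². -/
def det2 (u v : ℤ × ℤ) : ℤ := u.1 * v.2 - u.2 * v.1

/-- A vector of ℤ² is primitive if the gcd of its two coordinates is 1. -/
def IsPrimitive (u : ℤ × ℤ) : Prop := Int.gcd u.1 u.2 = 1

section QuadraticForm

variable {R M : Type*} [CommRing R] [AddCommGroup M] [Module R M] {Q : QuadraticForm R M}

theorem map_add_add_map_sub (Q : QuadraticForm R M) (x y : M) :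
    Q (x + y) + Q (x - y) = 2 * Q x + 2 * Q y := by
  rw [sub_eq_add_neg, QuadraticMap.map_add Q x y, QuadraticMap.map_add Q x (-y), Q.map_neg,
    Q.polar_neg_right]
  ring

variable [LinearOrder R] [IsStrictOrderedRing R]

theorem map_smul_le_of_abs_le_one (hQ : Q.PosDef) {e : R} (he : |e| ≤ 1) (x : M) :
    Q (e • x) ≤ Q x := by
  rw [Q.map_smul, smul_eq_mul, ← pow_two]
  exact mul_le_of_le_one_left (hQ.nonneg x) ((sq_le_one_iff_abs_le_one e).mpr he)

theorem eq_of_add_add_smul_eq_zero_of_two_le_abs (hQ : Q.PosDef) {w x y : M} {c : R}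
    (h : x + y + c • w = 0) (hx : Q x ≤ Q w) (hy : Q y ≤ Q w) (hc : 2 ≤ |c|) : x = y := by
  have hadd : Q (x + y) = c ^ 2 * Q w := by
    rw [eq_neg_of_add_eq_zero_left h, Q.map_neg, Q.map_smul, smul_eq_mul, pow_two]
  have hsq : 2 ^ 2 ≤ c ^ 2 := sq_le_sq.mpr (by rwa [abs_two])
  have hlower : 2 ^ 2 * Q w ≤ Q (x + y) := hadd ▸ mul_le_mul_of_nonneg_right hsq (hQ.nonneg w)
  have hsub : Q (x - y) ≤ 0 := by linarith [map_add_add_map_sub Q x y]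
  exact sub_eq_zero.mp (hQ.le_zero_iff.mp hsub)

/-- Here `u, w, x` play the roles of `v_{j-1}, v_j, v_{j+1}`, and `e, f, c` those of
`ε_{j-1}, ε_j, a_j`. -/
theorem a_of_max_norm_mem_general (hQ : Q.PosDef) {u w x : M} {e f c : R}
    (he : |e| ≤ 1) (hf : |f| ≤ 1) (h : e • u + f • x + c • w = 0)
    (hu : Q u ≤ Q w) (hx : Q x ≤ Q w) (hwx : LinearIndependent R ![w, x]) : |c| < 2 := by
  by_contra! hc
  have heq : e • u = f • x := eq_of_add_add_smul_eq_zero_of_two_le_abs hQ h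
    ((map_smul_le_of_abs_le_one hQ he u).trans hu)
    ((map_smul_le_of_abs_le_one hQ hf x).trans hx) hc
  have hrel : c • w + (f + f) • x = 0 := by
    rw [← h, heq, add_smul, add_comm]
  have hc0 : c = 0 := (LinearIndependent.pair_iff.mp hwx c (f + f) hrel).1
  norm_num [hc0] at hc

end QuadraticForm

/-- The squared Euclidean norm on `ℤ²`, as a quadratic form. -/
def euclideanForm : QuadraticForm ℤ (ℤ × ℤ) :=
  QuadraticMap.sq.prod QuadraticMap.sq

theorem euclideanForm_apply (u : ℤ × ℤ) : euclideanForm u = u.1 ^ 2 + u.2 ^ 2 := by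
  simp [euclideanForm, pow_two]

theorem posDef_euclideanForm : euclideanForm.PosDef :=
  have hsq : (QuadraticMap.sq : QuadraticForm ℤ ℤ).PosDef := fun _ hx => mul_self_pos.mpr hx
  hsq.prod hsq

theorem linearIndependent_of_det2_ne_zero {u v : ℤ × ℤ} (h : det2 u v ≠ 0) :
    LinearIndependent ℤ ![u, v] := by
  refine LinearIndependent.pair_iff.mpr fun s t hst => ?_
  obtain ⟨h₁, h₂⟩ : s * u.1 + t * v.1 = 0 ∧ s * u.2 + t * v.2 = 0 := by
    simpa [Prod.ext_iff] using hst
  have hs : s * det2 u v = 0 := by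
    unfold det2
    linear_combination v.2 * h₁ - v.1 * h₂
  have ht : t * det2 u v = 0 := by
    unfold det2
    linear_combination u.1 * h₂ - u.2 * h₁
  exact ⟨(mul_eq_zero_iff_right h).mp hs, (mul_eq_zero_iff_right h).mp ht⟩

/-- for an r-modular sequence v : ZMod k → ℤ² (k ≥ 2), with
ε_i ∈ {1,−1} defined by det(v_i, v_{i+1}) = ε_i·r and a_i the (unique) integer with
ε_{i−1}·v_{i−1} + ε_i·v_{i+1} + a_i·v_i = 0, if v_j has maximal Euclidean norm
(equivalently, maximal sum of squares of coordinates) then a_j ∈ {0, 1, −1}. -/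
theorem a_of_max_norm_mem (r : ℤ) (hr : 1 ≤ r) (k : ℕ) [NeZero k] (hk : 2 ≤ k)
    (v : ZMod k → ℤ × ℤ)
    (hprim : ∀ i, IsPrimitive (v i))
    (ε : ZMod k → ℤ) (hε : ∀ i, ε i = 1 ∨ ε i = -1)
    (hdet : ∀ i, det2 (v i) (v (i + 1)) = ε i * r)
    (a : ZMod k → ℤ)
    (ha : ∀ i, ε (i - 1) • v (i - 1) + ε i • v (i + 1) + a i • v i = 0)
    (j : ZMod k)
    (hj : ∀ i, (v i).1 ^ 2 + (v i).2 ^ 2 ≤ (v j).1 ^ 2 + (v j).2 ^ 2) :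
    a j = 0 ∨ a j = 1 ∨ a j = -1 := by
  have hε_abs (i : ZMod k) : |ε i| = 1 := (abs_eq zero_le_one).mpr (hε i)
  have hmax (i : ZMod k) : euclideanForm (v i) ≤ euclideanForm (v j) := by
    simpa only [euclideanForm_apply] using hj i
  have hindep : LinearIndependent ℤ ![v j, v (j + 1)] := by
    refine linearIndependent_of_det2_ne_zero ?_
    rw [hdet j]
    exact mul_ne_zero (abs_ne_zero.mp (by simp [hε_abs])) (by lia)
  have ha_abs : |a j| < 2 := a_of_max_norm_mem_general posDef_euclideanForm
    (hε_abs (j - 1)).le (hε_abs j).le (ha j) (hmax (j - 1)) (hmax (j + 1)) hindep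
  exact Int.abs_le_one_iff.mp (Int.lt_add_one_iff.mp ha_abs)
end

section
/- Let r ≥ 1 and let v₁, …, v_k (k ≥ 2) be an r-modular sequence, with ε_i and a_i as defined. Identify each v_i = (x_i, y_i) with the complex number z_i = x_i + y_i·√(−1), and set z_{k+1} = z₁. Then Σ_{i=1}^{k} arg(z_{i+1}/z_i) = (π/6)·( Σ_{i=1}^{k} a_i + 3·Σ_{i=1}^{k} ε_i ), where arg denotes the principal argument with values in (−π, π]. (Since det(v_i, v_{i+1}) = ±r ≠ 0, no quotient z_{i+1}/z_i is real, and the left-hand side equals 2π times the winding number around the origin of the closed polygonal loop v₁ → v₂ → ⋯ → v_k → v₁; thus the winding number of the sequence is (1/12)(Σ a_i + 3 Σ ε_i).) -/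
/-!
Put `τ_i = ε_i z_{i+1} / z_i`. It lies in the upper half-plane, and the relation defining `a_i`
says exactly that `τ_i = -1 / τ_{i-1} - a_i`.

The Dedekind eta function has an explicit logarithm `ℓ` on the upper half-plane, which satisfies
`ℓ(τ + m) = ℓ(τ) + 2πi m / 24` for integral `m` and `ℓ(-1/τ) = ℓ(τ) + (log τ) / 2 - πi/4`. The
second identity holds modulo `2πi` by the transformation law of `η`; both sides are continuous and
they agree at `τ = i`, so it holds exactly.

Hence `ℓ(τ_i) - ℓ(τ_{i-1}) = (log τ_{i-1}) / 2 - πi/4 - 2πi a_i / 24`. Summed over the cycle the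
left-hand side vanishes, and the imaginary part gives `∑ arg τ_i = (π/6) (∑ a_i + 3k)`. Finally
`arg (z_{i+1} / z_i) = arg τ_i + (π/2) (ε_i - 1)`, which turns `3k` into `3 ∑ ε_i`.
-/

section

open Complex ModularForm
open scoped ComplexConjugate Real
open UpperHalfPlane (upperHalfPlaneSet)

lemma ne_zero_of_im_pos {z : ℂ} (hz : 0 < z.im) : z ≠ 0 :=
  UpperHalfPlane.ne_zero ⟨z, hz⟩

lemma neg_one_div_im_pos {z : ℂ} (hz : 0 < z.im) : 0 < (-1 / z).im := by
  simpa only [neg_div, one_div, inv_neg] using UpperHalfPlane.im_inv_neg_coe_pos ⟨z, hz⟩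

lemma im_div_eq_im_conj_mul_div_normSq (z w : ℂ) :
    (w / z).im = (conj z * w).im / normSq z := by
  simp only [div_im, mul_im, conj_re, conj_im]
  ring

lemma arg_eq_arg_sign_mul_add {w : ℂ} {e : ℤ} (he : e = 1 ∨ e = -1) (hw : 0 < (e * w).im) :
    arg w = arg (e * w) + π / 2 * (e - 1) := by
  rcases he with rfl | rfl
  · simp
  · have h := arg_neg_eq_arg_sub_pi_of_im_pos hw
    push_cast at h ⊢
    rw [neg_one_mul, neg_neg] at h
    rw [neg_one_mul, h]
    ring

lemma continuousOn_tsum_log_one_add {ι α : Type*} [TopologicalSpace α] {f : ι → α → ℂ}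
    {u : ι → ℝ} {s : Set α} (hu : Summable u) (hf : ∀ i, ContinuousOn (f i) s)
    (hfu : ∀ i, ∀ x ∈ s, ‖f i x‖ ≤ u i) (hf1 : ∀ i, ∀ x ∈ s, 1 + f i x ∈ slitPlane) :
    ContinuousOn (fun x ↦ ∑' i, log (1 + f i x)) s :=
  (hu.hasSumUniformlyOn_log_one_add (.of_forall hfu)).tendstoUniformlyOn.continuousOn
    (.of_forall fun _ ↦ continuousOn_finsetSum _ fun i _ ↦
      (continuousOn_const.add (hf i)).clog (hf1 i))

lemma continuousOn_tsum_log_one_sub_pow :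
    ContinuousOn (fun q : ℂ ↦ ∑' n : ℕ, log (1 - q ^ (n + 1))) (Metric.ball 0 1) := by
  intro q hq
  obtain ⟨ρ, hqρ, hρ⟩ := exists_between (mem_ball_zero_iff.mp hq)
  have hρ0 : 0 ≤ ρ := (norm_nonneg q).trans hqρ.le
  have hbound : ∀ n : ℕ, ∀ x ∈ Metric.ball (0 : ℂ) ρ, ‖-x ^ (n + 1)‖ ≤ ρ ^ (n + 1) := by
    intro n x hx
    rw [norm_neg, norm_pow]
    gcongr
    exact (mem_ball_zero_iff.mp hx).le
  have hcont := continuousOn_tsum_log_one_add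
    ((summable_nat_add_iff 1).mpr (summable_geometric_of_lt_one hρ0 hρ))
    (fun n ↦ by fun_prop) hbound fun n x hx ↦ mem_slitPlane_of_norm_lt_one <|
      (hbound n x hx).trans_lt (pow_lt_one₀ hρ0 hρ n.succ_ne_zero)
  simp only [← sub_eq_add_neg] at hcont
  exact (hcont.continuousAt (Metric.isOpen_ball.mem_nhds
    (mem_ball_zero_iff.mpr hqρ))).continuousWithinAt

/-- The logarithm `2πiz/24 + ∑ log (1 - q ^ (n + 1))`, `q = exp (2πiz)`, of the Dedekind eta
function on the upper half-plane; elsewhere the series need not converge and the value is junk. -/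
noncomputable def logEta (z : ℂ) : ℂ :=
  2 * π * I * z / 24 + ∑' n : ℕ, log (1 - eta_q n z)

lemma exp_logEta {z : ℂ} (hz : 0 < z.im) : exp (logEta z) = η z := by
  have hsum : Summable fun n ↦ eta_q n z := by
    simpa only [neg_neg] using (summable_eta_q ⟨z, hz⟩).of_norm.neg
  rw [logEta, Complex.exp_add, ModularForm.eta,
    cexp_tsum_eq_tprod (fun n ↦ one_sub_eta_q_ne_zero n hz) hsum.clog_one_sub]
  rfl

lemma continuousOn_logEta : ContinuousOn logEta upperHalfPlaneSet := by
  have hmaps : Set.MapsTo (Function.Periodic.qParam 1) upperHalfPlaneSet (Metric.ball 0 1) :=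
    fun z hz ↦ mem_ball_zero_iff.mpr (mod_cast UpperHalfPlane.norm_qParam_lt_one 1 ⟨z, hz⟩)
  exact ContinuousOn.add (by fun_prop)
    (continuousOn_tsum_log_one_sub_pow.comp (by fun_prop) hmaps)

lemma logEta_add_intCast (z : ℂ) (m : ℤ) :
    logEta (z + m) = logEta z + 2 * π * I * m / 24 := by
  have hq (n : ℕ) : eta_q n (z + m) = eta_q n z := by
    have hper : exp (2 * π * I * (z + m)) = exp (2 * π * I * z) := by
      rw [mul_add, mul_comm _ (m : ℂ)]
      exact exp_periodic.int_mul m _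
    rw [eta_q_eq_pow, eta_q_eq_pow, hper]
  simp only [logEta, hq]
  ring

lemma eta_neg_one_div {z : ℂ} (hz : 0 < z.im) :
    η (-1 / z) = exp (log z / 2 - π * I / 4) * η z := by
  have h := eta_comp_eq_csqrt_I_inv hz
  simp only [Function.comp_apply, Pi.smul_apply, Pi.mul_apply, smul_eq_mul] at h
  rw [h, sqrt_eq_exp (ne_zero_of_im_pos hz), sqrt_eq_exp I_ne_zero, log_I, ← Complex.exp_neg,
    ← mul_assoc, ← Complex.exp_add]
  ring_nf

lemma logEta_neg_one_div {z : ℂ} (hz : 0 < z.im) :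
    logEta (-1 / z) = logEta z + (log z / 2 - π * I / 4) := by
  have hleft : ContinuousOn (fun w ↦ logEta (-1 / w)) upperHalfPlaneSet :=
    continuousOn_logEta.comp
      (continuousOn_const.div continuousOn_id fun _ hw ↦ ne_zero_of_im_pos hw)
      fun _ hw ↦ neg_one_div_im_pos hw
  have hlog : ContinuousOn log upperHalfPlaneSet :=
    continuousOn_id.clog fun _ hw ↦ mem_slitPlane_iff.mpr (.inr (ne_of_gt hw))
  have hright : ContinuousOn (fun w ↦ logEta w + (log w / 2 - π * I / 4)) upperHalfPlaneSet :=
    continuousOn_logEta.add ((hlog.div_const 2).sub continuousOn_const)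
  refine isCoveringMap_exp.eqOn_of_comp_eqOn (convex_halfSpace_im_gt 0).isPreconnected
    hleft hright (fun w hw ↦ Subtype.ext ?_) (a := I) (by simp) ?_ hz
  · change exp (logEta (-1 / w)) = exp (logEta w + (log w / 2 - π * I / 4))
    rw [exp_logEta (neg_one_div_im_pos hw), eta_neg_one_div hw, Complex.exp_add, exp_logEta hw,
      mul_comm]
  · have hI : -1 / I = I := by simp [neg_div]
    rw [hI, log_I]
    ring

lemma arg_eq_logEta_im_sub {τ : ℂ} (hτ : 0 < τ.im) (m : ℤ) :
    arg τ = 2 * ((logEta (-1 / τ - m)).im - (logEta τ).im) + π / 6 * (m + 3) := by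
  have h : logEta (-1 / τ - m) = logEta τ + (log τ / 2 - π * I / 4) - 2 * π * I * m / 24 := by
    have := logEta_add_intCast (-1 / τ) (-m)
    rw [logEta_neg_one_div hτ] at this
    push_cast at this
    rw [sub_eq_add_neg, this]
    ring
  have him : (logEta (-1 / τ - m)).im =
      (logEta τ).im + (arg τ / 2 - π / 4) - 2 * π * m / 24 := by
    rw [h]
    simp [log_im]
  linarith

lemma sum_arg_of_perm_neg_one_div_sub {ι : Type*} [Fintype ι] (σ : Equiv.Perm ι) {τ : ι → ℂ}
    {m : ι → ℤ} (hτ : ∀ i, 0 < (τ i).im) (hstep : ∀ i, τ (σ i) = -1 / τ i - m i) :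
    ∑ i, arg (τ i) = π / 6 * ∑ i, ((m i : ℝ) + 3) := by
  have hcancel : ∑ i, ((logEta (τ (σ i))).im - (logEta (τ i)).im) = 0 := by
    rw [Finset.sum_sub_distrib, Equiv.sum_comp σ fun i ↦ (logEta (τ i)).im, sub_self]
  calc ∑ i, arg (τ i)
      = ∑ i, (2 * ((logEta (τ (σ i))).im - (logEta (τ i)).im) + π / 6 * ((m i : ℝ) + 3)) :=
        Finset.sum_congr rfl fun i _ ↦ by rw [hstep, arg_eq_logEta_im_sub (hτ i) (m i)]
    _ = π / 6 * ∑ i, ((m i : ℝ) + 3) := by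
        rw [Finset.sum_add_distrib, ← Finset.mul_sum, ← Finset.mul_sum, hcancel, mul_zero,
          zero_add]

lemma mul_div_eq_neg_one_div_sub {K : Type*} [Field K] {e e' a x y w : K} (he : e * e = 1)
    (hy : y ≠ 0) (h : e * x + e' * w + a * y = 0) :
    e' * (w / y) = -1 / (e * (y / x)) - a := by
  rw [neg_div, one_div, mul_inv, inv_div, inv_eq_of_mul_eq_one_left he]
  field_simp
  linear_combination h

/-- The identification of `ℤ²` with the Gaussian integers in `ℂ`, `(x, y) ↦ x + yi`. -/
noncomputable def latticeToComplex : ℤ × ℤ →+ ℂ where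
  toFun u := u.1 + u.2 * I
  map_zero' := by simp
  map_add' u w := by
    simp only [Prod.fst_add, Prod.snd_add, Int.cast_add]
    ring

lemma im_conj_latticeToComplex_mul (u w : ℤ × ℤ) :
    (conj (latticeToComplex u) * latticeToComplex w).im = det2 u w := by
  simp [latticeToComplex, det2, sub_eq_add_neg]

lemma sign_mul_latticeToComplex_div_im_pos {u w : ℤ × ℤ} {e r : ℤ} (he : e = 1 ∨ e = -1)
    (hr : 0 < r) (hdet : det2 u w = e * r) :
    0 < (e * (latticeToComplex w / latticeToComplex u)).im := by
  have hcross : e * (conj (latticeToComplex u) * latticeToComplex w).im = r := by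
    rw [im_conj_latticeToComplex_mul, hdet]
    rcases he with rfl | rfl <;> simp
  have hrR : (0 : ℝ) < r := mod_cast hr
  have hu : latticeToComplex u ≠ 0 := by
    intro h
    simp [h, hrR.ne] at hcross
  have him : (e * (latticeToComplex w / latticeToComplex u)).im =
      r / normSq (latticeToComplex u) := by
    rw [← ofReal_intCast, im_ofReal_mul, im_div_eq_im_conj_mul_div_normSq, ← mul_div_assoc, hcross]
  rw [him]
  exact div_pos hrR (normSq_pos.mpr hu)

lemma intCast_mul_latticeToComplex_add_eq_zero {u v w : ℤ × ℤ} {b c d : ℤ}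
    (h : b • u + c • v + d • w = 0) :
    b * latticeToComplex u + c * latticeToComplex v + d * latticeToComplex w = 0 := by
  have h' := congrArg latticeToComplex h
  simp only [map_add, map_zsmul, map_zero] at h'
  simpa only [zsmul_eq_mul] using h'

theorem winding_number_of_r_modular_sequence_general (k : ℕ) [NeZero k] (z : ZMod k → ℂ)
    (ε : ZMod k → ℤ) (hε : ∀ i, ε i = 1 ∨ ε i = -1)
    (hpos : ∀ i, 0 < (ε i * (z (i + 1) / z i)).im) (a : ZMod k → ℤ)
    (ha : ∀ i, ε (i - 1) * z (i - 1) + ε i * z (i + 1) + a i * z i = 0) :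
    ∑ i : ZMod k, (z (i + 1) / z i).arg =
      π / 6 * (((∑ i : ZMod k, a i) + 3 * ∑ i : ZMod k, ε i : ℤ) : ℝ) := by
  set τ : ZMod k → ℂ := fun i ↦ ε i * (z (i + 1) / z i)
  have hz (i) : z i ≠ 0 := by
    intro h
    simpa [h] using hpos i
  have hstep (i) : τ (Equiv.addRight 1 i) = -1 / τ i - a (i + 1) := by
    have hεε : (ε i : ℂ) * ε i = 1 := by rcases hε i with h | h <;> simp [h]
    exact mul_div_eq_neg_one_div_sub hεε (hz (i + 1)) (by simpa using ha (i + 1))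
  have hshift : ∑ i, (a (i + 1) : ℝ) = ∑ i, (a i : ℝ) :=
    Equiv.sum_comp (Equiv.addRight (1 : ZMod k)) fun i ↦ (a i : ℝ)
  calc ∑ i, arg (z (i + 1) / z i)
      = ∑ i, arg (τ i) + ∑ i, π / 2 * ((ε i : ℝ) - 1) := by
        rw [← Finset.sum_add_distrib]
        exact Finset.sum_congr rfl fun i _ ↦ arg_eq_arg_sign_mul_add (hε i) (hpos i)
    _ = π / 6 * ∑ i, ((a (i + 1) : ℝ) + 3) + ∑ i, π / 2 * ((ε i : ℝ) - 1) := by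
        rw [sum_arg_of_perm_neg_one_div_sub (Equiv.addRight 1) hpos hstep]
    _ = π / 6 * (((∑ i, a i) + 3 * ∑ i, ε i : ℤ) : ℝ) := by
        rw [← Finset.mul_sum, Finset.sum_add_distrib, Finset.sum_sub_distrib, hshift]
        simp only [Finset.sum_const, nsmul_eq_mul]
        push_cast
        ring

end

/-- for an r-modular sequence v : ZMod k → ℤ² (k ≥ 2), with ε_i and a_i
as usual, identifying v_i = (x_i, y_i) with z_i = x_i + y_i·i ∈ ℂ, the total turning
angle Σ arg(z_{i+1}/z_i) (which is 2π times the winding number of the loop about the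
origin) equals (π/6)·(Σ a_i + 3·Σ ε_i). -/
theorem winding_number_of_r_modular_sequence (r : ℤ) (hr : 1 ≤ r)
    (k : ℕ) [NeZero k] (hk : 2 ≤ k)
    (v : ZMod k → ℤ × ℤ)
    (hprim : ∀ i, IsPrimitive (v i))
    (ε : ZMod k → ℤ) (hε : ∀ i, ε i = 1 ∨ ε i = -1)
    (hdet : ∀ i, det2 (v i) (v (i + 1)) = ε i * r)
    (a : ZMod k → ℤ)
    (ha : ∀ i, ε (i - 1) • v (i - 1) + ε i • v (i + 1) + a i • v i = 0)
    (z : ZMod k → ℂ)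
    (hz : ∀ i, z i = ((v i).1 : ℂ) + ((v i).2 : ℂ) * Complex.I) :
    ∑ i : ZMod k, (z (i + 1) / z i).arg =
      Real.pi / 6 * (((∑ i : ZMod k, a i) + 3 * ∑ i : ZMod k, ε i : ℤ) : ℝ) := by
  have hz' : ∀ i, z i = latticeToComplex (v i) := hz
  exact winding_number_of_r_modular_sequence_general k z ε hε
    (fun i ↦ by simpa only [hz'] using sign_mul_latticeToComplex_div_im_pos (hε i) hr (hdet i)) a
    fun i ↦ by simpa only [hz'] using intCast_mul_latticeToComplex_add_eq_zero (ha i)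
end

section
/- Let r ≥ 1 and let v₁, …, v_k (k ≥ 2) be an r-modular sequence, with ε_i and a_i as defined. For each i define w_i = (v_i − v_{i−1}) / det(v_{i−1}, v_i) ∈ ℚ² (where v₀ = v_k). Then for every i (indices modulo k), det(w_i, w_{i+1}) = (a_i + ε_i + ε_{i−1}) / r. -/
/-- det(u,v) = u₁v₂ − u₂v₁ for u, v ∈ ℚ². -/
def det2Q (u v : ℚ × ℚ) : ℚ := u.1 * v.2 - u.2 * v.1

/-- The inclusion ℤ² → ℚ². -/
def ratify (u : ℤ × ℤ) : ℚ × ℚ := ((u.1 : ℚ), (u.2 : ℚ))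

section AlternatingForm

variable {R M : Type*} [CommRing R] [AddCommGroup M] [Module R M] {B : LinearMap.BilinForm R M}

theorem apply_sub_sub_of_isAlt (hB : B.IsAlt) (p q s : M) :
    B (q - p) (s - q) = B p q + B q s - B p s := by
  simp only [map_sub, LinearMap.sub_apply, hB q]
  ring

theorem mul_apply_eq_neg_mul_apply_of_relation (hB : B.IsAlt) {p q s : M} {e f a : R}
    (hrel : e • p + f • s + a • q = 0) : f * B p s = -(a * B p q) := by
  have hpair : B p (e • p + f • s + a • q) = 0 := by rw [hrel, map_zero]
  simp only [map_add, map_smul, smul_eq_mul, hB p] at hpair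
  linear_combination hpair

theorem apply_sub_sub_eq_mul_of_relation (hB : B.IsAlt) {p q s : M} {e f a r : R}
    (he : e ^ 2 = 1) (hf : f ^ 2 = 1) (hpq : B p q = e * r) (hqs : B q s = f * r)
    (hrel : e • p + f • s + a • q = 0) :
    B (q - p) (s - q) = e * f * r * (a + f + e) := by
  have hps : f * B p s = -(a * (e * r)) := hpq ▸ mul_apply_eq_neg_mul_apply_of_relation hB hrel
  rw [apply_sub_sub_of_isAlt hB, hpq, hqs]
  linear_combination (B p s - e * r) * hf - f * hps - f * r * he

end AlternatingForm

/-- A cyclic sequence is indexed by `ι = ZMod k`, a bi-infinite one by `ι = ℤ`. -/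
theorem det_dual_of_r_modular_sequence_general {ι K V : Type*} [AddGroup ι] [One ι] [Field K]
    [AddCommGroup V] [Module K V] {B : LinearMap.BilinForm K V} (hB : B.IsAlt)
    {r : K} (hr : r ≠ 0) {v : ι → V} {ε : ι → K} (hε : ∀ i, ε i = 1 ∨ ε i = -1)
    (hdet : ∀ i, B (v i) (v (i + 1)) = ε i * r) {a : ι → K}
    (ha : ∀ i, ε (i - 1) • v (i - 1) + ε i • v (i + 1) + a i • v i = 0)
    {w : ι → V} (hw : ∀ i, w i = (B (v (i - 1)) (v i))⁻¹ • (v i - v (i - 1))) (i : ι) :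
    B (w i) (w (i + 1)) = (a i + ε i + ε (i - 1)) / r := by
  have hsq (j : ι) : ε j ^ 2 = 1 := sq_eq_one_iff.mpr (hε j)
  have hne (j : ι) : ε j ≠ 0 := by rcases hε j with h | h <;> simp [h]
  have hprev : B (v (i - 1)) (v i) = ε (i - 1) * r := by simpa using hdet (i - 1)
  have hnum := apply_sub_sub_eq_mul_of_relation hB (hsq (i - 1)) (hsq i) hprev (hdet i) (ha i)
  rw [hw i, hw (i + 1), add_sub_cancel_right, hprev, hdet i]
  simp only [map_smul, LinearMap.smul_apply, smul_eq_mul, hnum]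
  field_simp [hne (i - 1), hne i]

section RationalPlane

/-- The determinant on `ℚ²`, i.e. `det2Q`, bundled as a bilinear form. -/
def detForm : LinearMap.BilinForm ℚ (ℚ × ℚ) :=
  LinearMap.mk₂ ℚ det2Q
    (fun _ _ _ ↦ by simp only [det2Q, Prod.fst_add, Prod.snd_add]; ring)
    (fun _ _ _ ↦ by simp only [det2Q, Prod.smul_fst, Prod.smul_snd, smul_eq_mul]; ring)
    (fun _ _ _ ↦ by simp only [det2Q, Prod.fst_add, Prod.snd_add]; ring)
    (fun _ _ _ ↦ by simp only [det2Q, Prod.smul_fst, Prod.smul_snd, smul_eq_mul]; ring)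

theorem detForm_apply (u v : ℚ × ℚ) : detForm u v = det2Q u v := rfl

theorem isAlt_detForm : detForm.IsAlt := fun u ↦ sub_eq_zero.mpr (mul_comm u.1 u.2)

theorem detForm_ratify (u v : ℤ × ℤ) : detForm (ratify u) (ratify v) = det2 u v := by
  simp [detForm_apply, det2Q, det2, ratify]

theorem ratify_zero : ratify 0 = 0 := by simp [ratify]

theorem ratify_add (u v : ℤ × ℤ) : ratify (u + v) = ratify u + ratify v := by simp [ratify]

theorem ratify_zsmul (n : ℤ) (u : ℤ × ℤ) : ratify (n • u) = (n : ℚ) • ratify u := by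
  simp [ratify]

theorem ratify_relation {p q s : ℤ × ℤ} {e f a : ℤ} (hrel : e • p + f • s + a • q = 0) :
    (e : ℚ) • ratify p + (f : ℚ) • ratify s + (a : ℚ) • ratify q = 0 := by
  simp only [← ratify_zsmul, ← ratify_add, hrel, ratify_zero]

end RationalPlane

/-- for an r-modular sequence v : ZMod k → ℤ² (k ≥ 2), with ε_i and a_i
as usual, setting w_i = (v_i − v_{i−1}) / det(v_{i−1}, v_i) ∈ ℚ², one has
det(w_i, w_{i+1}) = (a_i + ε_i + ε_{i−1}) / r for every i. -/
theorem det_dual_of_r_modular_sequence (r : ℤ) (hr : 1 ≤ r)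
    (k : ℕ) [NeZero k] (hk : 2 ≤ k)
    (v : ZMod k → ℤ × ℤ)
    (hprim : ∀ i, IsPrimitive (v i))
    (ε : ZMod k → ℤ) (hε : ∀ i, ε i = 1 ∨ ε i = -1)
    (hdet : ∀ i, det2 (v i) (v (i + 1)) = ε i * r)
    (a : ZMod k → ℤ)
    (ha : ∀ i, ε (i - 1) • v (i - 1) + ε i • v (i + 1) + a i • v i = 0)
    (w : ZMod k → ℚ × ℚ)
    (hw : ∀ i, w i = ((det2 (v (i - 1)) (v i) : ℤ) : ℚ)⁻¹ • (ratify (v i) - ratify (v (i - 1)))) :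
    ∀ i : ZMod k, det2Q (w i) (w (i + 1)) = ((a i + ε i + ε (i - 1) : ℤ) : ℚ) / (r : ℚ) := by
  intro i
  have hr' : (r : ℚ) ≠ 0 := Int.cast_ne_zero.mpr (by lia)
  have hε' (j : ZMod k) : (ε j : ℚ) = 1 ∨ (ε j : ℚ) = -1 := mod_cast hε j
  have hdet' (j : ZMod k) : detForm (ratify (v j)) (ratify (v (j + 1))) = ε j * r := by
    rw [detForm_ratify, hdet j, Int.cast_mul]
  simp only [← detForm_ratify] at hw
  rw [← detForm_apply]
  push_cast
  exact det_dual_of_r_modular_sequence_general isAlt_detForm hr' hε' hdet'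
    (fun j ↦ ratify_relation (ha j)) hw i
end

section
/- Let r ≥ 1 and let P = (v₁, …, v_k) (k ≥ 2) be an r-modular sequence, with ε_i and a_i as defined. For each i define w_i = (v_i − v_{i−1}) / det(v_{i−1}, v_i) ∈ ℚ² (where v₀ = v_k), set B(P) = Σ_{i=1}^{k} det(v_i, v_{i+1}) and B(P^∨) = Σ_{i=1}^{k} det(w_i, w_{i+1}). Then (1/r)·B(P) + r·B(P^∨) = Σ_{i=1}^{k} a_i + 3·Σ_{i=1}^{k} ε_i. -/
section CommRing

variable {R V : Type*} [CommRing R] [AddCommGroup V] [Module R V] {ω : LinearMap.BilinForm R V}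

theorem apply_sub_sub_of_isAlt_s4 (hω : ω.IsAlt) (p q s : V) :
    ω (q - p) (s - q) = ω p q + ω q s - ω p s := by
  simp only [map_sub, LinearMap.sub_apply, hω.self_eq_zero q]
  ring

theorem mul_apply_eq_neg_of_isAlt_of_smul_add_eq_zero (hω : ω.IsAlt) {e f a : R} {p q s : V}
    (hrel : e • p + f • s + a • q = 0) : f * ω p s = -(a * ω p q) := by
  have hpair : ω p (e • p + f • s + a • q) = 0 := by rw [hrel, map_zero]
  simp only [map_add, map_smul, smul_eq_mul, hω.self_eq_zero p, mul_zero, zero_add] at hpair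
  exact eq_neg_of_add_eq_zero_left hpair

end CommRing

section Field

variable {K V : Type*} [Field K] [AddCommGroup V] [Module K V] {ω : LinearMap.BilinForm K V}

theorem mul_apply_inv_smul_sub_of_isAlt (hω : ω.IsAlt) {r e f a : K} (hr : r ≠ 0)
    (he : e = 1 ∨ e = -1) (hf : f = 1 ∨ f = -1) {p q s : V}
    (hpq : ω p q = e * r) (hqs : ω q s = f * r) (hrel : e • p + f • s + a • q = 0) :
    r * ω ((ω p q)⁻¹ • (q - p)) ((ω q s)⁻¹ • (s - q)) = a + e + f := by
  have he0 : e ≠ 0 := by rintro rfl; simp at he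
  have hf0 : f ≠ 0 := by rintro rfl; simp at hf
  have he_inv : e⁻¹ = e := inv_eq_self₀.2 (by tauto)
  have hf_inv : f⁻¹ = f := inv_eq_self₀.2 (by tauto)
  have hps : ω p s = -(a * e * f * r) := by
    have h := mul_apply_eq_neg_of_isAlt_of_smul_add_eq_zero hω hrel
    rw [hpq] at h
    linear_combination f * h - ω p s * sq_eq_one_iff.2 hf
  calc r * ω ((ω p q)⁻¹ • (q - p)) ((ω q s)⁻¹ • (s - q))
      = r * ((e * r)⁻¹ * ((f * r)⁻¹ * (e * r + f * r + a * e * f * r))) := by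
        simp only [map_smul, LinearMap.smul_apply, smul_eq_mul, apply_sub_sub_of_isAlt_s4 hω, hpq,
          hqs, hps]
        ring
    _ = a + e⁻¹ + f⁻¹ := by field_simp; ring
    _ = a + e + f := by rw [he_inv, hf_inv]

variable {ι : Type*}

/-- The dual sequence `P^∨` of a sequence `v` with values in a space with a form `ω`, which plays
the role of the determinant. The cyclic order is encoded by the permutation `σ` that sends an
index to the next one. -/
def dualSequence (ω : LinearMap.BilinForm K V) (σ : Equiv.Perm ι) (v : ι → V) (i : ι) : V :=
  (ω (v (σ.symm i)) (v i))⁻¹ • (v i - v (σ.symm i))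

variable {σ : Equiv.Perm ι} {r : K} {v : ι → V} {ε a : ι → K}

theorem mul_apply_dualSequence (hω : ω.IsAlt) (hr : r ≠ 0) (hε : ∀ i, ε i = 1 ∨ ε i = -1)
    (hdet : ∀ i, ω (v i) (v (σ i)) = ε i * r)
    (ha : ∀ i, ε (σ.symm i) • v (σ.symm i) + ε i • v (σ i) + a i • v i = 0) (i : ι) :
    r * ω (dualSequence ω σ v i) (dualSequence ω σ v (σ i)) = a i + ε (σ.symm i) + ε i := by
  have hprev : ω (v (σ.symm i)) (v i) = ε (σ.symm i) * r := by simpa using hdet (σ.symm i)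
  simpa only [dualSequence, σ.symm_apply_apply] using
    mul_apply_inv_smul_sub_of_isAlt hω hr (hε _) (hε i) hprev (hdet i) (ha i)

variable [Fintype ι]

theorem mul_sum_apply_dualSequence (hω : ω.IsAlt) (hr : r ≠ 0) (hε : ∀ i, ε i = 1 ∨ ε i = -1)
    (hdet : ∀ i, ω (v i) (v (σ i)) = ε i * r)
    (ha : ∀ i, ε (σ.symm i) • v (σ.symm i) + ε i • v (σ i) + a i • v i = 0) :
    r * ∑ i, ω (dualSequence ω σ v i) (dualSequence ω σ v (σ i)) = ∑ i, a i + 2 * ∑ i, ε i := by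
  simp only [Finset.mul_sum, mul_apply_dualSequence hω hr hε hdet ha, Finset.sum_add_distrib,
    σ.symm.sum_comp ε]
  rw [← Finset.mul_sum]
  ring

theorem B_add_B_dual_of_r_modular_sequence_general (hω : ω.IsAlt) (hr : r ≠ 0)
    (hε : ∀ i, ε i = 1 ∨ ε i = -1) (hdet : ∀ i, ω (v i) (v (σ i)) = ε i * r)
    (ha : ∀ i, ε (σ.symm i) • v (σ.symm i) + ε i • v (σ i) + a i • v i = 0) :
    1 / r * ∑ i, ω (v i) (v (σ i)) + r * ∑ i, ω (dualSequence ω σ v i) (dualSequence ω σ v (σ i)) =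
      ∑ i, a i + 3 * ∑ i, ε i := by
  have hB : 1 / r * ∑ i, ω (v i) (v (σ i)) = ∑ i, ε i := by
    simp only [hdet, ← Finset.sum_mul]
    field_simp
  rw [hB, mul_sum_apply_dualSequence hω hr hε hdet ha]
  ring

end Field

/-- The determinant `det2Q` as a bilinear form, an instance of the forms `ω` above. -/
def det2QForm : LinearMap.BilinForm ℚ (ℚ × ℚ) :=
  LinearMap.mk₂ ℚ det2Q
    (fun u u' v => by simp only [det2Q, Prod.fst_add, Prod.snd_add]; ring)
    (fun c u v => by simp only [det2Q, Prod.smul_fst, Prod.smul_snd, smul_eq_mul]; ring)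
    (fun u v v' => by simp only [det2Q, Prod.fst_add, Prod.snd_add]; ring)
    (fun c u v => by simp only [det2Q, Prod.smul_fst, Prod.smul_snd, smul_eq_mul]; ring)

theorem det2QForm_apply (u v : ℚ × ℚ) : det2QForm u v = det2Q u v := rfl

theorem isAlt_det2QForm : det2QForm.IsAlt := fun u => by
  rw [det2QForm_apply, det2Q]
  ring

theorem det2Q_ratify (u v : ℤ × ℤ) : det2Q (ratify u) (ratify v) = det2 u v := by
  simp only [det2Q, ratify, det2, Int.cast_sub, Int.cast_mul]

theorem dualSequence_det2QForm_ratify {ι : Type*} (σ : Equiv.Perm ι) (v : ι → ℤ × ℤ) (i : ι) :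
    dualSequence det2QForm σ (ratify ∘ v) i =
      (det2 (v (σ.symm i)) (v i) : ℚ)⁻¹ • (ratify (v i) - ratify (v (σ.symm i))) := by
  simp only [dualSequence, Function.comp_apply, det2QForm_apply, det2Q_ratify]

theorem cast_smul_ratify_add_eq_zero {e f a : ℤ} {p q s : ℤ × ℤ}
    (hrel : e • p + f • s + a • q = 0) :
    (e : ℚ) • ratify p + (f : ℚ) • ratify s + (a : ℚ) • ratify q = 0 := by
  have h₁ : e * p.1 + f * s.1 + a * q.1 = 0 := congrArg Prod.fst hrel
  have h₂ : e * p.2 + f * s.2 + a * q.2 = 0 := congrArg Prod.snd hrel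
  ext
  · change (e * p.1 + f * s.1 + a * q.1 : ℚ) = 0
    exact_mod_cast h₁
  · change (e * p.2 + f * s.2 + a * q.2 : ℚ) = 0
    exact_mod_cast h₂

/-- for an r-modular sequence P = (v₁,…,v_k) (k ≥ 2), with ε_i and a_i
as usual, w_i = (v_i − v_{i−1}) / det(v_{i−1}, v_i), B(P) = Σ det(v_i, v_{i+1}) and
B(P^∨) = Σ det(w_i, w_{i+1}), we have (1/r)·B(P) + r·B(P^∨) = Σ a_i + 3·Σ ε_i. -/
theorem B_add_B_dual_of_r_modular_sequence (r : ℤ) (hr : 1 ≤ r)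
    (k : ℕ) [NeZero k] (hk : 2 ≤ k)
    (v : ZMod k → ℤ × ℤ)
    (hprim : ∀ i, IsPrimitive (v i))
    (ε : ZMod k → ℤ) (hε : ∀ i, ε i = 1 ∨ ε i = -1)
    (hdet : ∀ i, det2 (v i) (v (i + 1)) = ε i * r)
    (a : ZMod k → ℤ)
    (ha : ∀ i, ε (i - 1) • v (i - 1) + ε i • v (i + 1) + a i • v i = 0)
    (w : ZMod k → ℚ × ℚ)
    (hw : ∀ i, w i = ((det2 (v (i - 1)) (v i) : ℤ) : ℚ)⁻¹ • (ratify (v i) - ratify (v (i - 1)))) :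
    (1 / (r : ℚ)) * ((∑ i : ZMod k, det2 (v i) (v (i + 1)) : ℤ) : ℚ)
        + (r : ℚ) * ∑ i : ZMod k, det2Q (w i) (w (i + 1))
      = (((∑ i : ZMod k, a i) + 3 * ∑ i : ZMod k, ε i : ℤ) : ℚ) := by
  let σ : Equiv.Perm (ZMod k) := (Equiv.subRight 1).symm
  have hw_dual : w = dualSequence det2QForm σ (ratify ∘ v) :=
    funext fun i => (hw i).trans (dualSequence_det2QForm_ratify σ v i).symm
  have hdetQ : ∀ i, det2QForm (ratify (v i)) (ratify (v (i + 1))) = ε i * r := fun i => by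
    rw [det2QForm_apply, det2Q_ratify, hdet, Int.cast_mul]
  have hmain := B_add_B_dual_of_r_modular_sequence_general (σ := σ) (v := ratify ∘ v)
    (a := fun i => (a i : ℚ)) isAlt_det2QForm (Int.cast_ne_zero.2 (by omega))
    (fun i => by exact_mod_cast hε i) hdetQ (fun i => cast_smul_ratify_add_eq_zero (ha i))
  rw [← hw_dual] at hmain
  simp only [det2QForm_apply, Function.comp_apply, det2Q_ratify] at hmain
  exact_mod_cast hmain
end

section
/- Let r be a positive integer, and let P be a Fano polygon with vertices v₁, …, v_k listed in counterclockwise cyclic order, such that det(v_i, v_{i+1}) = r for every i (indices modulo k). For each i let a_i be the unique integer with v_{i−1} + v_{i+1} + a_i·v_i = (0,0). Then Σ_{i=1}^{k} a_i = 12 − 3k. -/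
/-- `v : ZMod k → ℤ × ℤ` lists, in counterclockwise cyclic order, the vertices of a
Fano polygon: a convex lattice polygon (so k ≥ 3 and the points are in strictly
convex position, every other vertex lying strictly to the left of each directed
edge v_i → v_{i+1}) whose vertices are primitive and whose interior contains the
origin (the origin lies strictly to the left of each directed edge, which is
exactly 0 < det(v_i, v_{i+1})). -/
def IsFanoCCW {k : ℕ} (v : ZMod k → ℤ × ℤ) : Prop :=
  3 ≤ k ∧ (∀ i, IsPrimitive (v i)) ∧ (∀ i, 0 < det2 (v i) (v (i + 1))) ∧
    ∀ i j : ZMod k, j ≠ i → j ≠ i + 1 → 0 < det2 (v (i + 1) - v i) (v j - v i)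

lemma det2_self (u : ℤ × ℤ) : det2 u u = 0 := by
  simp only [det2, mul_comm, sub_self]

lemma neg_det2 (u v : ℤ × ℤ) : -det2 u v = det2 v u := by
  simp only [det2]
  ring

lemma det2_sub_sub (u v w : ℤ × ℤ) :
    det2 (v - u) (w - u) = det2 u v + det2 v w - det2 u w := by
  simp only [det2, Prod.fst_sub, Prod.snd_sub]
  ring

lemma det2_plucker (t u v w : ℤ × ℤ) :
    det2 t u * det2 v w - det2 t v * det2 u w + det2 t w * det2 u v = 0 := by
  simp only [det2]
  ring

lemma sum_det2_add_two_zmod_four (w : ZMod 4 → ℤ × ℤ) :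
    ∑ i, det2 (w i) (w (i + 2)) = 0 := by
  have h : ∑ i, det2 (w i) (w (i + 2)) = -∑ i, det2 (w i) (w (i + 2)) := by
    calc ∑ i, det2 (w i) (w (i + 2))
      _ = ∑ i, det2 (w (i + 2)) (w (i + 2 + 2)) :=
        (Equiv.sum_comp (Equiv.addRight (2 : ZMod 4)) fun i => det2 (w i) (w (i + 2))).symm
      _ = ∑ i, -det2 (w i) (w (i + 2)) := by
        refine Finset.sum_congr rfl fun i _ => ?_
        rw [neg_det2, add_assoc, show (2 + 2 : ZMod 4) = 0 from rfl, add_zero]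
      _ = -∑ i, det2 (w i) (w (i + 2)) := Finset.sum_neg_distrib _
  omega

/-- A smooth Fano polygon, given by its vertices in counterclockwise cyclic order: consecutive
vertices form positively oriented bases of `ℤ²`, and every other vertex lies strictly to the left
of each directed edge; `3 ≤ k` and primitivity of the vertices follow. The polygons of the main
theorem take this form in the basis `v 0, v 1` of the lattice spanned by their vertices. -/
structure IsSmoothFanoCCW {k : ℕ} (w : ZMod k → ℤ × ℤ) : Prop where
  det2_succ : ∀ i, det2 (w i) (w (i + 1)) = 1
  convex : ∀ i j : ZMod k, j ≠ i → j ≠ i + 1 → 0 < det2 (w (i + 1) - w i) (w j - w i)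

namespace IsSmoothFanoCCW

variable {k : ℕ} {w : ZMod k → ℤ × ℤ}

lemma three_le [NeZero k] (hw : IsSmoothFanoCCW w) : 3 ≤ k := by
  by_contra! hk
  have hpos : 0 < k := NeZero.pos k
  have h₀ := hw.det2_succ 0
  have h₁ := hw.det2_succ 1
  interval_cases k
  · rw [Subsingleton.elim (0 + 1 : ZMod 1) 0, det2_self] at h₀
    omega
  · rw [zero_add, ← neg_det2] at h₀
    rw [show (1 + 1 : ZMod 2) = 0 from rfl] at h₁
    omega

lemma det2_add_two (hw : IsSmoothFanoCCW w) (u : ℤ × ℤ) (i : ZMod k) :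
    det2 u (w (i + 2)) =
      det2 (w i) (w (i + 2)) * det2 u (w (i + 1)) - det2 u (w i) := by
  have h := det2_plucker u (w i) (w (i + 1)) (w (i + 2))
  have h₁ := hw.det2_succ (i + 1)
  rw [add_assoc, one_add_one_eq_two] at h₁
  rw [hw.det2_succ, h₁] at h
  linear_combination h

lemma det2_succ_le (hw : IsSmoothFanoCCW w) {i j : ZMod k} (hi : i ≠ j) (hj : i ≠ j + 1) :
    det2 (w i) (w (j + 1)) ≤ det2 (w i) (w j) := by
  have h := hw.convex j i hi hj
  rw [det2_sub_sub, hw.det2_succ, ← neg_det2 (w i), ← neg_det2 (w i)] at h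
  omega

lemma det2_add_natCast_le (hw : IsSmoothFanoCCW w) (i : ZMod k) {m n : ℕ} (hm : 0 < m)
    (hmn : m ≤ n) (hn : n < k) : det2 (w i) (w (i + n)) ≤ det2 (w i) (w (i + m)) := by
  have ne_add {l : ℕ} (h0 : 0 < l) (hl : l < k) : i ≠ i + l := by
    rw [Ne, left_eq_add, ZMod.natCast_eq_zero_iff]
    exact Nat.not_dvd_of_pos_of_lt h0 hl
  induction n, hmn using Nat.le_induction with
  | base => exact le_rfl
  | succ n hmn ih =>
    have h₁ := ne_add (by omega : 0 < n + 1) hn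
    rw [Nat.cast_succ, ← add_assoc] at h₁ ⊢
    exact (hw.det2_succ_le (ne_add (by omega) (by omega)) h₁).trans (ih (by omega))

lemma det2_add_two_le_one [NeZero k] (hw : IsSmoothFanoCCW w) (i : ZMod k) :
    det2 (w i) (w (i + 2)) ≤ 1 := by
  have h := hw.det2_add_natCast_le i one_pos one_le_two hw.three_le
  rw [Nat.cast_one, hw.det2_succ] at h
  exact_mod_cast h

lemma det2_add_three (hw : IsSmoothFanoCCW w) (i : ZMod k) :
    det2 (w i) (w (i + 3)) =
      det2 (w i) (w (i + 2)) * det2 (w (i + 1)) (w (i + 1 + 2)) - 1 := by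
  have h := hw.det2_add_two (w i) (i + 1)
  rw [hw.det2_succ] at h
  rw [show i + 3 = i + 1 + 2 by ring, h, show i + 1 + 1 = i + 2 by ring]
  ring

lemma det2_add_three_nonpos (hw : IsSmoothFanoCCW w) (hk : 4 ≤ k) (i : ZMod k) :
    det2 (w i) (w (i + 3)) ≤ 0 := by
  have : NeZero k := ⟨by omega⟩
  have hle : det2 (w i) (w (i + 3)) ≤ det2 (w i) (w (i + 2)) := by
    exact_mod_cast hw.det2_add_natCast_le i two_pos (by decide : 2 ≤ 3) hk
  obtain h | h : det2 (w i) (w (i + 2)) ≤ 0 ∨ det2 (w i) (w (i + 2)) = 1 := by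
    have := hw.det2_add_two_le_one i
    omega
  · exact hle.trans h
  · have := hw.det2_add_two_le_one (i + 1)
    rw [hw.det2_add_three, h]
    omega

lemma det2_add_four_le_neg_one (hw : IsSmoothFanoCCW w) (hk : 5 ≤ k) (i : ZMod k) :
    det2 (w i) (w (i + 4)) ≤ -1 := by
  have hle : det2 (w i) (w (i + 4)) ≤ det2 (w i) (w (i + 3)) := by
    exact_mod_cast hw.det2_add_natCast_le i three_pos (by decide : 3 ≤ 4) hk
  have h₃ := hw.det2_add_three_nonpos (by omega) i
  by_contra! h₄
  have h₃_zero : det2 (w i) (w (i + 3)) = 0 := by omega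
  have h₄_zero : det2 (w i) (w (i + 4)) = 0 := by omega
  have h := det2_plucker (w i) (w (i + 1)) (w (i + 3)) (w (i + 4))
  have h₃₄ := hw.det2_succ (i + 3)
  rw [show i + 3 + 1 = i + 4 by ring] at h₃₄
  rw [h₃_zero, h₄_zero, h₃₄, hw.det2_succ] at h
  omega

lemma le_six (hw : IsSmoothFanoCCW w) : k ≤ 6 := by
  by_contra! hk
  have h₄ := hw.det2_add_four_le_neg_one (by omega) 0
  have h₃ := hw.det2_add_three_nonpos (by omega) (0 + 4)
  have hle := hw.det2_add_natCast_le (0 + 4) three_pos (by omega : 3 ≤ k - 4) (by omega)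
  have hcycle : (0 + 4 + (k - 4 : ℕ) : ZMod k) = 0 := by
    rw [Nat.cast_sub (by omega), ZMod.natCast_self]
    push_cast
    ring
  rw [hcycle, ← neg_det2] at hle
  push_cast at hle
  omega

lemma det2_add_two_of_three {w : ZMod 3 → ℤ × ℤ} (hw : IsSmoothFanoCCW w) (i : ZMod 3) :
    det2 (w i) (w (i + 2)) = -1 := by
  have h := hw.det2_succ (i + 2)
  rw [add_assoc, show (2 + 1 : ZMod 3) = 0 from rfl, add_zero] at h
  rw [← neg_det2, h]

lemma det2_add_two_of_six {w : ZMod 6 → ℤ × ℤ} (hw : IsSmoothFanoCCW w) (i : ZMod 6) :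
    det2 (w i) (w (i + 2)) = 1 := by
  have h := hw.det2_add_four_le_neg_one (by decide) (i + 2)
  rw [add_assoc, show (2 + 4 : ZMod 6) = 0 from rfl, add_zero, ← neg_det2] at h
  have := hw.det2_add_two_le_one i
  omega

lemma sum_det2_add_two_of_five {w : ZMod 5 → ℤ × ℤ} (hw : IsSmoothFanoCCW w) :
    ∑ i, det2 (w i) (w (i + 2)) = 3 := by
  set s : ZMod 5 → ℤ := fun i => det2 (w i) (w (i + 2)) with hs
  have h_three (i) : det2 (w i) (w (i + 3)) = -s (i + 3) := by
    simp only [hs]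
    rw [neg_det2, add_assoc, show (3 + 2 : ZMod 5) = 0 from rfl, add_zero]
  have h_frieze (i) : s i * s (i + 1) + s (i + 3) = 1 := by
    have h := hw.det2_add_three i
    rw [h_three] at h
    linear_combination -h
  have h_binary (i) : s i = 0 ∨ s i = 1 := by
    have h := hw.det2_add_three_nonpos (by decide) (i - 3)
    rw [h_three, sub_add_cancel] at h
    have : s i ≤ 1 := hw.det2_add_two_le_one i
    omega
  have h₀ : s 0 * s 1 + s 3 = 1 := h_frieze 0
  have h₁ : s 1 * s 2 + s 4 = 1 := h_frieze 1
  have h₄ : s 4 * s 0 + s 2 = 1 := h_frieze 4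
  have h_sum : ∑ i, s i = s 0 + s 1 + s 2 + s 3 + s 4 := Fin.sum_univ_five s
  rw [h_sum]
  rcases h_binary 0 with e₀ | e₀ <;> rcases h_binary 1 with e₁ | e₁ <;>
    simp only [e₀, e₁] at h₀ h₁ h₄ ⊢ <;> omega

theorem sum_det2_add_two [NeZero k] (hw : IsSmoothFanoCCW w) :
    ∑ i, det2 (w i) (w (i + 2)) = 3 * (k : ℤ) - 12 := by
  have h3 := hw.three_le
  have h6 := hw.le_six
  interval_cases k
  · simp [hw.det2_add_two_of_three]
  · simpa using sum_det2_add_two_zmod_four _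
  · simpa using hw.sum_det2_add_two_of_five
  · simp [hw.det2_add_two_of_six]

end IsSmoothFanoCCW

lemma exists_int_coords {V : Type*} [AddCommGroup V] {k : ℕ} [NeZero k] {v : ZMod k → V}
    {a : ZMod k → ℤ} (ha : ∀ i, v (i - 1) + v (i + 1) + a i • v i = 0) :
    ∃ w : ZMod k → ℤ × ℤ, ∀ i, v i = (w i).1 • v 0 + (w i).2 • v 1 := by
  have hspan (n : ℕ) : ∃ p : ℤ × ℤ, v n = p.1 • v 0 + p.2 • v 1 := by
    induction n using Nat.twoStepInduction with
    | zero => exact ⟨(1, 0), by simp⟩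
    | one => exact ⟨(0, 1), by simp⟩
    | more n ih ih' =>
      obtain ⟨p, hp⟩ := ih
      obtain ⟨q, hq⟩ := ih'
      refine ⟨-a (n + 1) • q - p, ?_⟩
      have h := ha (n + 1)
      rw [add_sub_cancel_right, add_assoc (n : ZMod k), one_add_one_eq_two] at h
      push_cast at hq ⊢
      simp only [Prod.fst_sub, Prod.snd_sub, Prod.smul_fst, Prod.smul_snd, smul_eq_mul]
      rw [hp, hq] at h
      rw [← sub_eq_zero, ← h]
      module
  choose p hp using hspan
  exact ⟨fun i => p i.val, fun i => by simpa using hp i.val⟩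

/-- The determinant of two plane vectors with coordinates in an arbitrary commutative ring; over `ℤ`
it unfolds to `det2`. It serves to state the theorem for polygons in any plane `R × R`. -/
def planeDet {R : Type*} [CommRing R] (u v : R × R) : R := u.1 * v.2 - u.2 * v.1

lemma planeDet_zsmul_add_zsmul {R : Type*} [CommRing R] (e f : R × R) (p q : ℤ × ℤ) :
    planeDet (p.1 • e + p.2 • f) (q.1 • e + q.2 • f) = det2 p q * planeDet e f := by
  simp only [planeDet, det2, Prod.fst_add, Prod.snd_add, Prod.smul_fst, Prod.smul_snd]
  simp only [zsmul_eq_mul]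
  push_cast
  ring

section Normalization

variable {R : Type*} [CommRing R] {r : R} {k : ℕ} {v : ZMod k → R × R} {w : ZMod k → ℤ × ℤ}

lemma planeDet_sub_one_add_one (hdet : ∀ i, planeDet (v i) (v (i + 1)) = r) {a : ZMod k → ℤ}
    (ha : ∀ i, v (i - 1) + v (i + 1) + a i • v i = 0) (i : ZMod k) :
    planeDet (v (i - 1)) (v (i + 1)) = -a i * r := by
  have hd := hdet (i - 1)
  rw [sub_add_cancel] at hd
  have h₁ := congrArg Prod.fst (ha i)
  have h₂ := congrArg Prod.snd (ha i)
  simp only [Prod.fst_add, Prod.snd_add, Prod.smul_fst, Prod.smul_snd, Prod.fst_zero,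
    Prod.snd_zero] at h₁ h₂
  simp only [zsmul_eq_mul] at h₁ h₂
  simp only [planeDet] at hd ⊢
  linear_combination (v (i - 1)).1 * h₂ - (v (i - 1)).2 * h₁ - (a i : R) * hd

lemma planeDet_eq_det2_mul (hdet : ∀ i, planeDet (v i) (v (i + 1)) = r)
    (hw : ∀ i, v i = (w i).1 • v 0 + (w i).2 • v 1) (i j : ZMod k) :
    planeDet (v i) (v j) = det2 (w i) (w j) * r := by
  have hd := hdet 0
  rw [zero_add] at hd
  rw [hw i, hw j, planeDet_zsmul_add_zsmul, hd]

lemma eq_neg_det2_of_coords [IsDomain R] [CharZero R] (hr : r ≠ 0)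
    (hdet : ∀ i, planeDet (v i) (v (i + 1)) = r)
    {a : ZMod k → ℤ} (ha : ∀ i, v (i - 1) + v (i + 1) + a i • v i = 0)
    (hw : ∀ i, v i = (w i).1 • v 0 + (w i).2 • v 1) (i : ZMod k) :
    a i = -det2 (w (i - 1)) (w (i + 1)) := by
  have h := planeDet_sub_one_add_one hdet ha i
  rw [planeDet_eq_det2_mul hdet hw] at h
  have h' : det2 (w (i - 1)) (w (i + 1)) = -a i := by
    exact_mod_cast mul_right_cancel₀ hr h
  rw [h', neg_neg]

lemma isSmoothFanoCCW_of_coords [LinearOrder R] [IsStrictOrderedRing R] (hr : 0 < r)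
    (hdet : ∀ i, planeDet (v i) (v (i + 1)) = r)
    (hconv : ∀ i j, j ≠ i → j ≠ i + 1 → 0 < planeDet (v (i + 1) - v i) (v j - v i))
    (hw : ∀ i, v i = (w i).1 • v 0 + (w i).2 • v 1) : IsSmoothFanoCCW w where
  det2_succ i := by
    have h := planeDet_eq_det2_mul hdet hw i (i + 1)
    rw [hdet, right_eq_mul₀ hr.ne'] at h
    exact_mod_cast h
  convex i j hi hj := by
    have hsub (l : ZMod k) : v l - v i = (w l - w i).1 • v 0 + (w l - w i).2 • v 1 := by
      rw [hw l, hw i, Prod.fst_sub, Prod.snd_sub]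
      module
    have hd := hdet 0
    rw [zero_add] at hd
    have h := hconv i j hi hj
    rw [hsub, hsub, planeDet_zsmul_add_zsmul, hd, mul_pos_iff_of_pos_right hr] at h
    exact_mod_cast h

end Normalization

theorem sum_a_eq_twelve_sub_three_k_general {R : Type*} [CommRing R] [LinearOrder R]
    [IsStrictOrderedRing R] {r : R} (hr : 0 < r) {k : ℕ} [NeZero k] {v : ZMod k → R × R}
    (hdet : ∀ i, planeDet (v i) (v (i + 1)) = r)
    (hconv : ∀ i j, j ≠ i → j ≠ i + 1 → 0 < planeDet (v (i + 1) - v i) (v j - v i))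
    {a : ZMod k → ℤ} (ha : ∀ i, v (i - 1) + v (i + 1) + a i • v i = 0) :
    ∑ i, a i = 12 - 3 * (k : ℤ) := by
  obtain ⟨w, hw⟩ := exists_int_coords ha
  have hsmooth := isSmoothFanoCCW_of_coords hr hdet hconv hw
  calc ∑ i, a i
    _ = ∑ i, a (i + 1) := (Equiv.sum_comp (Equiv.addRight (1 : ZMod k)) a).symm
    _ = ∑ i, -det2 (w i) (w (i + 2)) := by
      refine Finset.sum_congr rfl fun i _ => ?_
      rw [eq_neg_det2_of_coords hr.ne' hdet ha hw, add_sub_cancel_right, add_assoc,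
        one_add_one_eq_two]
    _ = 12 - 3 * (k : ℤ) := by
      rw [Finset.sum_neg_distrib, hsmooth.sum_det2_add_two, neg_sub]

/-- if P is a Fano polygon whose vertices v₁,…,v_k (ccw) satisfy
det(v_i, v_{i+1}) = r for all i, and a_i is the unique integer with
v_{i−1} + v_{i+1} + a_i·v_i = 0, then Σ a_i = 12 − 3k. -/
theorem sum_a_eq_twelve_sub_three_k (r : ℤ) (hr : 0 < r)
    (k : ℕ) [NeZero k] (v : ZMod k → ℤ × ℤ)
    (hF : IsFanoCCW v)
    (hdet : ∀ i, det2 (v i) (v (i + 1)) = r)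
    (a : ZMod k → ℤ)
    (ha : ∀ i, v (i - 1) + v (i + 1) + a i • v i = 0) :
    ∑ i : ZMod k, a i = 12 - 3 * (k : ℤ) :=
  sum_a_eq_twelve_sub_three_k_general hr hdet hF.2.2.2 ha
end

section
/- Let r be a positive integer with r ∉ {1, 2, 4}, and let P be a Fano polygon with vertices v₁, …, v_k listed in counterclockwise cyclic order such that for every i (indices modulo k): det(v_i, v_{i+1}) = r and g_i² < r, where g_i is the gcd of the two coordinates of v_{i+1} − v_i (so every edge cone of P is an R-cone of determinant r; equivalently, P has singularity content (0, {1/r(1,s₁), …, 1/r(1,s_k)})). Then k ∈ {3, 4, 5, 6}, and there exist a matrix M ∈ GL₂(ℤ) and an integer s such that M maps the vertex set of P onto one of the following nine sets: (1) {(0,1), (−r,s−1), (r,−s)} with gcd(r,s) = gcd(r,s−1) = 1; (2) {(0,1), (−r,s), (0,−1), (r,−s)} with gcd(r,s) = 1; (3) {(0,1), (−r,s+1), (0,−1), (r,−s)} with gcd(r,s) = gcd(r,s+1) = 1; (4) {(0,1), (−r,s), (r,−s−1), (r,−s)} with gcd(r,s) = gcd(r,s+1) = 1; (5) {(0,1),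 (−r,s), (−r,s−1), (r,−s)} with gcd(r,s) = gcd(r,s−1) = 1; (6) {(0,1), (−r,s+1), (−r,s), (0,−1), (r,−s)} with gcd(r,s) = gcd(r,s+1) = 1; (7) {(0,1), (−r,s), (−r,s−1), (0,−1), (r,−s)} with gcd(r,s) = gcd(r,s−1) = 1; (8) {(0,1), (−r,s+1), (−r,s), (r,−s−1), (r,−s)} with gcd(r,s) = gcd(r,s+1) = 1; (9) {(0,1), (−r,s+1), (−r,s), (0,−1), (r,−s−1), (r,−s)} with gcd(r,s) = gcd(r,s+1) = 1. -/
/-- The action of an integer 2×2 matrix on ℤ². -/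
def mApply (M : Matrix (Fin 2) (Fin 2) ℤ) (u : ℤ × ℤ) : ℤ × ℤ :=
  (M 0 0 * u.1 + M 0 1 * u.2, M 1 0 * u.1 + M 1 1 * u.2)

theorem exists_smul_of_det2_eq_zero {u x : ℤ × ℤ} (hu : IsPrimitive u) (h : det2 u x = 0) :
    ∃ a : ℤ, x = a • u := by
  obtain ⟨c, d, hcd⟩ := Int.isCoprime_iff_gcd_eq_one.mpr hu
  simp only [det2] at h
  refine ⟨c * x.1 + d * x.2, Prod.ext ?_ ?_⟩
  · simp only [Prod.smul_fst, smul_eq_mul]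
    linear_combination (-x.1) * hcd - d * h
  · simp only [Prod.smul_snd, smul_eq_mul]
    linear_combination (-x.2) * hcd + c * h

theorem coord_unique_of_det2_ne_zero {w u : ℤ × ℤ} {p q p' q' : ℤ} (h : det2 w u ≠ 0)
    (he : p • w + q • u = p' • w + q' • u) : p = p' ∧ q = q' := by
  have h1 := congrArg Prod.fst he
  have h2 := congrArg Prod.snd he
  simp only [det2, Prod.fst_add, Prod.snd_add, Prod.smul_fst, Prod.smul_snd, smul_eq_mul] at *
  constructor <;> apply mul_right_cancel₀ h
  · linear_combination u.2 * h1 - u.1 * h2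
  · linear_combination w.1 * h2 - w.2 * h1

theorem det2_sub_coord_sub (w u : ℤ × ℤ) (p q : ℤ) :
    det2 (u - w) (p • w + q • u - w) = det2 w u * (1 - (p + q)) := by
  simp only [det2, Prod.fst_add, Prod.snd_add, Prod.fst_sub, Prod.snd_sub, Prod.smul_fst,
    Prod.smul_snd, smul_eq_mul]
  ring

theorem mApply_neg (M : Matrix (Fin 2) (Fin 2) ℤ) (x : ℤ × ℤ) : mApply M (-x) = -mApply M x := by
  ext <;> simp only [mApply, Prod.fst_neg, Prod.snd_neg] <;> ring

theorem mApply_sub (M : Matrix (Fin 2) (Fin 2) ℤ) (x y : ℤ × ℤ) :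
    mApply M (x - y) = mApply M x - mApply M y := by
  ext <;> simp only [mApply, Prod.fst_sub, Prod.snd_sub] <;> ring

theorem IsPrimitive.mApply {M : Matrix (Fin 2) (Fin 2) ℤ} (hM : IsUnit M.det) {x : ℤ × ℤ}
    (hx : IsPrimitive x) : IsPrimitive (mApply M x) := by
  obtain ⟨e, f, hef⟩ := Int.isCoprime_iff_gcd_eq_one.mpr hx
  obtain ⟨δ, hδ⟩ := hM.exists_right_inv
  rw [Matrix.det_fin_two] at hδ
  -- The Bézout coefficients are the row vector `(e, f)` times the inverse matrix `δ • adj M`.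
  refine Int.isCoprime_iff_gcd_eq_one.mp
    ⟨δ * (e * M 1 1 - f * M 1 0), δ * (f * M 0 0 - e * M 0 1), ?_⟩
  simp only [_root_.mApply]
  linear_combination (e * x.1 + f * x.2) * hδ + hef

theorem exists_mApply_eq_zero_one {u : ℤ × ℤ} (hu : IsPrimitive u) (w : ℤ × ℤ) :
    ∃ (M : Matrix (Fin 2) (Fin 2) ℤ) (s : ℤ),
      M.det = 1 ∧ mApply M u = (0, 1) ∧ mApply M w = (det2 w u, -s) := by
  obtain ⟨c, d, hcd⟩ := Int.isCoprime_iff_gcd_eq_one.mpr hu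
  refine ⟨!![u.2, -u.1; c, d], -(c * w.1 + d * w.2), ?_, ?_, ?_⟩
  · rw [Matrix.det_fin_two_of]
    linear_combination hcd
  · ext
    · simp [mApply, mul_comm]
    · simpa [mApply] using hcd
  · ext
    · simp only [mApply, det2, Matrix.of_apply, Matrix.cons_val]
      ring
    · simp [mApply]

/-- The wall relations `v i + v (i + 2) = b i • v (i + 1)` between the rays `v` of a smooth complete
toric surface; `b i` is minus the self-intersection number of the divisor of `v (i + 1)`. -/
def IsWallRelation {A R M : Type*} [AddMonoidWithOne A] [CommRing R] [AddCommGroup M] [Module R M]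
    (v : A → M) (b : A → R) : Prop :=
  ∀ i, v i + v (i + 2) = b i • v (i + 1)

namespace IsWallRelation

section Module

variable {A R M : Type*} [AddMonoidWithOne A] [CommRing R] [AddCommGroup M] [Module R M]
  {v : A → M} {b : A → R}

theorem apply_add_two (hb : IsWallRelation v b) (i : A) :
    v (i + 2) = b i • v (i + 1) - v i :=
  eq_sub_of_add_eq' (hb i)

theorem apply_add_three (hb : IsWallRelation v b) (i : A) :
    v (i + 3) = (-b (i + 1)) • v i + (b i * b (i + 1) - 1) • v (i + 1) := by
  have h := hb.apply_add_two (i + 1)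
  have h12 : (1 : A) + 2 = 3 := by norm_num
  rw [add_assoc i, add_assoc i, one_add_one_eq_two, h12, hb.apply_add_two i] at h
  rw [h]
  module

theorem apply_add_four (hb : IsWallRelation v b) (i : A) :
    v (i + 4) = (1 - b (i + 1) * b (i + 2)) • v i +
      (b (i + 2) * (b i * b (i + 1) - 1) - b i) • v (i + 1) := by
  have h := hb.apply_add_two (i + 2)
  rw [add_assoc i, add_assoc i, two_add_two_eq_four, two_add_one_eq_three, hb.apply_add_two i,
    hb.apply_add_three i] at h
  rw [h]
  module

theorem apply_add_three_of_eq_one (hb : IsWallRelation v b) (h : ∀ i, b i = 1) (i : A) :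
    v (i + 3) = -v i := by
  simp [hb.apply_add_three, h]

end Module

theorem eq_neg_one_of_three {v : ZMod 3 → ℤ × ℤ} {b : ZMod 3 → ℤ} (hb : IsWallRelation v b)
    (hdet : ∀ i, det2 (v i) (v (i + 1)) ≠ 0) (i : ZMod 3) : b i = -1 := by
  have hcyc : ∀ j : ZMod 3, j + 2 + 2 = j + 1 ∧ j + 2 + 1 = j := by decide
  have h := hb (i + 2)
  rw [(hcyc i).1, (hcyc i).2, hb.apply_add_two i] at h
  have hu := (coord_unique_of_det2_ne_zero (p := -1) (q := b i + 1) (p' := b (i + 2)) (q' := 0)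
    (hdet i) (by linear_combination h)).2
  omega

theorem mul_eq_zero_and_eq_neg_of_four {v : ZMod 4 → ℤ × ℤ} {b : ZMod 4 → ℤ}
    (hb : IsWallRelation v b) (hdet : ∀ i, det2 (v i) (v (i + 1)) ≠ 0) (i : ZMod 4) :
    b (i + 1) * b (i + 2) = 0 ∧ b (i + 2) = -b i := by
  have hcyc : ∀ j : ZMod 4, j + 2 + 2 = j ∧ j + 2 + 1 = j + 3 := by decide
  have h := hb (i + 2)
  rw [(hcyc i).1, (hcyc i).2, hb.apply_add_two i, hb.apply_add_three i] at h
  obtain ⟨hw, hu⟩ := coord_unique_of_det2_ne_zero (p := 0) (q := b i)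
    (p' := -(b (i + 1) * b (i + 2))) (q' := b (i + 2) * (b i * b (i + 1) - 1)) (hdet i)
    (by linear_combination h)
  exact ⟨by linarith, by linear_combination hu + b i * hw⟩

theorem mul_eq_one_sub_of_five {v : ZMod 5 → ℤ × ℤ} {b : ZMod 5 → ℤ} (hb : IsWallRelation v b)
    (hdet : ∀ i, det2 (v i) (v (i + 1)) ≠ 0) (i : ZMod 5) :
    b i * b (i + 1) = 1 - b (i + 3) := by
  have hcyc : ∀ j : ZMod 5, j + 3 + 2 = j ∧ j + 3 + 1 = j + 4 ∧ j + 4 + 2 = j + 1 ∧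
      j + 4 + 1 = j := by decide
  obtain ⟨h32, h31, h42, h41⟩ := hcyc i
  have h3 := hb (i + 3)
  have h4 := hb (i + 4)
  rw [h42, h41] at h4
  rw [h32, h31, hb.apply_add_three i, eq_sub_of_add_eq h4] at h3
  have hu := (coord_unique_of_det2_ne_zero (p := 1 - b (i + 1)) (q := b i * b (i + 1) - 1)
    (p' := b (i + 3) * b (i + 4)) (q' := -b (i + 3)) (hdet i)
    (by linear_combination h3)).2
  linarith

end IsWallRelation

theorem add_natCast_ne_add_natCast {k m n : ℕ} (i : ZMod k) (hm : m < k) (hn : n < k)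
    (hmn : m ≠ n) : i + m ≠ i + n := by
  rwa [Ne, add_right_inj, ZMod.natCast_eq_natCast_iff', Nat.mod_eq_of_lt hm, Nat.mod_eq_of_lt hn]

namespace IsFanoCCW

variable {k : ℕ} {v : ZMod k → ℤ × ℤ} {b : ZMod k → ℤ} {p q : ℤ}

theorem isPrimitive (hF : IsFanoCCW v) (i : ZMod k) : IsPrimitive (v i) :=
  hF.2.1 i

theorem det2_ne_zero (hF : IsFanoCCW v) (i : ZMod k) : det2 (v i) (v (i + 1)) ≠ 0 :=
  (hF.2.2.1 i).ne'

theorem exists_isWallRelation {r : ℤ} (hF : IsFanoCCW v)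
    (hdet : ∀ i, det2 (v i) (v (i + 1)) = r) : ∃ b : ZMod k → ℤ, IsWallRelation v b := by
  suffices ∀ i, ∃ a : ℤ, v i + v (i + 2) = a • v (i + 1) from Classical.axiomOfChoice this
  intro i
  apply exists_smul_of_det2_eq_zero (hF.isPrimitive _)
  have h0 := hdet i
  have h1 := hdet (i + 1)
  rw [add_assoc, one_add_one_eq_two] at h1
  simp only [det2, Prod.fst_add, Prod.snd_add] at *
  linarith

theorem coord_add_nonpos (hF : IsFanoCCW v) {n : ℕ} (hn : 2 ≤ n) (hnk : n < k) {i : ZMod k}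
    (h : v (i + n) = p • v i + q • v (i + 1)) : p + q ≤ 0 := by
  obtain ⟨-, -, hdet, hconv⟩ := hF
  have hne0 : i + n ≠ i := by
    simpa using add_natCast_ne_add_natCast i hnk (n := 0) (by omega) (by omega)
  have hne1 : i + n ≠ i + 1 := by
    simpa using add_natCast_ne_add_natCast i hnk (n := 1) (by omega) (by omega)
  have hleft := hconv i (i + n) hne0 hne1
  rw [h, det2_sub_coord_sub] at hleft
  have := pos_of_mul_pos_right hleft (hdet i).le
  omega

theorem wall_le_one (hF : IsFanoCCW v) (hb : IsWallRelation v b) (i : ZMod k) : b i ≤ 1 := by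
  have := hF.coord_add_nonpos (n := 2) (i := i) (p := -1) (q := b i) le_rfl hF.1
    (by rw [Nat.cast_ofNat, hb.apply_add_two]; module)
  omega

theorem fst_coord_nonpos (hF : IsFanoCCW v) (hb : IsWallRelation v b) {n : ℕ} (hn : 2 ≤ n)
    (hnk : n + 1 < k) {i : ZMod k} (h : v (i + n) = p • v i + q • v (i + 1)) : p ≤ 0 := by
  obtain ⟨j, rfl⟩ : ∃ j, i = j + 1 := ⟨i - 1, by ring⟩
  have hsucc : v (j + 1 + 1) = b j • v (j + 1) - v j := by
    rw [add_assoc, one_add_one_eq_two, hb.apply_add_two]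
  have hedge : p + q ≤ 0 := hF.coord_add_nonpos hn (by omega) h
  have hprev : -q + (p + q * b j) ≤ 0 :=
    hF.coord_add_nonpos (n := n + 1) (i := j) (by omega) hnk
      (by rw [Nat.cast_succ, add_comm (n : ZMod k), ← add_assoc, h, hsucc]; module)
  by_contra! hp
  have hq : q < 0 := by omega
  have hmul : q * 1 ≤ q * b j := mul_le_mul_of_nonpos_left (hF.wall_le_one hb j) hq.le
  linarith

theorem wall_nonneg (hF : IsFanoCCW v) (hb : IsWallRelation v b) (hk : 5 ≤ k) (i : ZMod k) :
    0 ≤ b i := by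
  have := hF.fst_coord_nonpos hb (n := 3) (by omega) hk (hb.apply_add_three (i - 1))
  rw [sub_add_cancel] at this
  omega

theorem wall_eq_one (hF : IsFanoCCW v) (hb : IsWallRelation v b) (hk : 6 ≤ k) (i : ZMod k) :
    b i = 1 := by
  have hmul := hF.fst_coord_nonpos hb (n := 4) (by omega) hk (hb.apply_add_four (i - 1))
  rw [sub_add_cancel] at hmul
  have hle := hF.wall_le_one hb
  have hmul_le : b i * b (i - 1 + 2) ≤ b i :=
    mul_le_of_le_one_right (hF.wall_nonneg hb (by omega) i) (hle _)
  exact le_antisymm (hle i) (by linarith)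

theorem le_six (hF : IsFanoCCW v) (hb : IsWallRelation v b) : k ≤ 6 := by
  by_contra! hk
  have hantipode := hb.apply_add_three_of_eq_one (hF.wall_eq_one hb (by omega))
  have hperiod : v (0 + (6 : ℕ)) = (1 : ℤ) • v 0 + (0 : ℤ) • v (0 + 1) := by
    have h6 : (0 : ZMod k) + (6 : ℕ) = 0 + 3 + 3 := by push_cast; ring
    rw [h6, hantipode, hantipode]
    module
  have := hF.coord_add_nonpos (by omega) hk hperiod
  omega

theorem range_eq_of_three {v : ZMod 3 → ℤ × ℤ} {b : ZMod 3 → ℤ} (hF : IsFanoCCW v)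
    (hb : IsWallRelation v b) (i : ZMod 3) :
    Set.range v = {v (i + 1), -v i - v (i + 1), v i} := by
  have h2 : v (i + 2) = -v i - v (i + 1) := by
    rw [hb.apply_add_two, hb.eq_neg_one_of_three hF.det2_ne_zero]
    module
  have huniv : ∀ j : ZMod 3, Finset.univ = {j + 1, j + 2, j} := by decide
  rw [← Set.image_univ, ← Finset.coe_univ, huniv i, ← h2]
  simp [Set.image_insert_eq]

theorem exists_range_eq_of_four {v : ZMod 4 → ℤ × ℤ} {b : ZMod 4 → ℤ} (hF : IsFanoCCW v)
    (hb : IsWallRelation v b) :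
    ∃ i, Set.range v = {v (i + 1), -v i, -v (i + 1), v i} ∨
      Set.range v = {v (i + 1), v (i + 1) - v i, -v (i + 1), v i} := by
  have hclose := hb.mul_eq_zero_and_eq_neg_of_four hF.det2_ne_zero
  obtain ⟨i, hi, hi1⟩ : ∃ i, (b i = 0 ∨ b i = 1) ∧ b (i + 1) = 0 := by
    by_cases hone : ∃ i, b i = 1
    · obtain ⟨i, hi⟩ := hone
      obtain ⟨hmul, hneg⟩ := hclose i
      rw [hneg, hi] at hmul
      exact ⟨i, Or.inr hi, by omega⟩
    · push Not at hone
      have hzero : ∀ i, b i = 0 := fun i => by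
        have hneg := (hclose i).2
        have hi := (hF.wall_le_one hb i).lt_of_ne (hone i)
        have hi2 := (hF.wall_le_one hb (i + 2)).lt_of_ne (hone (i + 2))
        omega
      exact ⟨0, Or.inl (hzero 0), hzero _⟩
  have h2 := hb.apply_add_two i
  have h3 : v (i + 3) = -v (i + 1) := by simp [hb.apply_add_three, hi1]
  have huniv : ∀ j : ZMod 4, Finset.univ = {j + 1, j + 2, j + 3, j} := by decide
  have hrange : Set.range v = {v (i + 1), v (i + 2), v (i + 3), v i} := by
    rw [← Set.image_univ, ← Finset.coe_univ, huniv i]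
    simp [Set.image_insert_eq]
  refine ⟨i, hi.imp (fun h => ?_) (fun h => ?_)⟩ <;> simpa [h2, h3, h] using hrange

theorem exists_three_walls_eq_one_of_five {v : ZMod 5 → ℤ × ℤ} {b : ZMod 5 → ℤ}
    (hF : IsFanoCCW v) (hb : IsWallRelation v b) :
    ∃ i, b i = 1 ∧ b (i + 1) = 1 ∧ b (i + 2) = 1 := by
  have hclose := hb.mul_eq_one_sub_of_five hF.det2_ne_zero
  have hzero_or_one : ∀ i, b i = 0 ∨ b i = 1 := fun i => by
    have := hF.wall_nonneg hb le_rfl i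
    have := hF.wall_le_one hb i
    omega
  obtain ⟨j, hj⟩ : ∃ j, b (j + 1) = 0 := by
    by_contra! hne
    have hone : ∀ i, b i = 1 := fun i =>
      (hzero_or_one i).resolve_left (by simpa using hne (i - 1))
    simpa [hone] using hclose 0
  have hcyc : ∀ j : ZMod 5, j + 1 + 3 = j + 4 ∧ j + 2 + 1 = j + 3 ∧ j + 2 + 2 = j + 4 ∧
      j + 3 + 1 = j + 4 ∧ j + 3 + 2 = j + 2 + 3 := by decide
  obtain ⟨h13, h21, h22, h31, h32⟩ := hcyc j
  have hj3 : b (j + 3) = 1 := by linarith [hclose j, mul_eq_zero_of_right (b j) hj]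
  have hj4 : b (j + 4) = 1 := by
    have := hclose (j + 1)
    rw [hj, h13] at this
    omega
  rcases hzero_or_one (j + 2) with hj2 | hj2
  · have hj5 := hclose (j + 2)
    rw [hj2] at hj5
    exact ⟨j + 3, hj3, h31 ▸ hj4, h32 ▸ by omega⟩
  · exact ⟨j + 2, hj2, h21 ▸ hj3, h22 ▸ hj4⟩

theorem exists_range_eq_of_five {v : ZMod 5 → ℤ × ℤ} {b : ZMod 5 → ℤ} (hF : IsFanoCCW v)
    (hb : IsWallRelation v b) :
    ∃ i, Set.range v = {v (i + 1), v (i + 1) - v i, -v i, -v (i + 1), v i} := by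
  obtain ⟨i, hi, hi1, hi2⟩ := hF.exists_three_walls_eq_one_of_five hb
  have h2 : v (i + 2) = v (i + 1) - v i := by simp [hb.apply_add_two, hi]
  have h3 : v (i + 3) = -v i := by simp [hb.apply_add_three, hi, hi1]
  have h4 : v (i + 4) = -v (i + 1) := by simp [hb.apply_add_four, hi, hi1, hi2]
  have huniv : ∀ j : ZMod 5, Finset.univ = {j + 1, j + 2, j + 3, j + 4, j} := by decide
  refine ⟨i, ?_⟩
  rw [← Set.image_univ, ← Finset.coe_univ, huniv i, ← h2, ← h3, ← h4]
  simp [Set.image_insert_eq]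

theorem range_eq_of_six {v : ZMod 6 → ℤ × ℤ} {b : ZMod 6 → ℤ} (hF : IsFanoCCW v)
    (hb : IsWallRelation v b) (i : ZMod 6) :
    Set.range v = {v (i + 1), v (i + 1) - v i, -v i, -v (i + 1), v i - v (i + 1), v i} := by
  have hone := hF.wall_eq_one hb le_rfl
  have h2 : v (i + 2) = v (i + 1) - v i := by simp [hb.apply_add_two, hone]
  have hantipode := hb.apply_add_three_of_eq_one hone
  have huniv : ∀ j : ZMod 6,
      Finset.univ = {j + 1, j + 2, j + 3, j + 1 + 3, j + 2 + 3, j} := by decide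
  rw [← Set.image_univ, ← Finset.coe_univ, huniv i, ← neg_sub (v (i + 1)), ← h2]
  simp [Set.image_insert_eq, hantipode]

theorem exists_range_eq (hF : IsFanoCCW v) (hb : IsWallRelation v b) :
    ∃ i,
      (k = 3 ∧ Set.range v = {v (i + 1), -v i - v (i + 1), v i}) ∨
      (k = 4 ∧ Set.range v = {v (i + 1), -v i, -v (i + 1), v i}) ∨
      (k = 4 ∧ Set.range v = {v (i + 1), v (i + 1) - v i, -v (i + 1), v i}) ∨
      (k = 5 ∧ Set.range v = {v (i + 1), v (i + 1) - v i, -v i, -v (i + 1), v i}) ∨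
      (k = 6 ∧ Set.range v =
        {v (i + 1), v (i + 1) - v i, -v i, -v (i + 1), v i - v (i + 1), v i}) := by
  have hk3 := hF.1
  have hk6 := hF.le_six hb
  obtain rfl | rfl | rfl | rfl : k = 3 ∨ k = 4 ∨ k = 5 ∨ k = 6 := by omega
  · exact ⟨0, by simp [hF.range_eq_of_three hb 0]⟩
  · obtain ⟨i, hi⟩ := hF.exists_range_eq_of_four hb
    exact ⟨i, by tauto⟩
  · obtain ⟨i, hi⟩ := hF.exists_range_eq_of_five hb
    exact ⟨i, by tauto⟩
  · exact ⟨0, by simp [hF.range_eq_of_six hb 0]⟩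

end IsFanoCCW

theorem classification_of_fano_with_R_cones_general (r : ℤ) (k : ℕ) (v : ZMod k → ℤ × ℤ)
    (hF : IsFanoCCW v) (hdet : ∀ i, det2 (v i) (v (i + 1)) = r) :
    ∃ (M : Matrix (Fin 2) (Fin 2) ℤ) (s : ℤ), M.det = 1 ∧ Int.gcd r s = 1 ∧
      ((k = 3 ∧ Set.range (fun i => mApply M (v i)) =
            ({(0, 1), (-r, s - 1), (r, -s)} : Set (ℤ × ℤ)) ∧ Int.gcd r (s - 1) = 1) ∨
        (k = 4 ∧ Set.range (fun i => mApply M (v i)) =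
            ({(0, 1), (-r, s), (0, -1), (r, -s)} : Set (ℤ × ℤ))) ∨
        (k = 4 ∧ Set.range (fun i => mApply M (v i)) =
            ({(0, 1), (-r, s + 1), (0, -1), (r, -s)} : Set (ℤ × ℤ)) ∧ Int.gcd r (s + 1) = 1) ∨
        (k = 5 ∧ Set.range (fun i => mApply M (v i)) =
            ({(0, 1), (-r, s + 1), (-r, s), (0, -1), (r, -s)} : Set (ℤ × ℤ)) ∧
              Int.gcd r (s + 1) = 1) ∨
        (k = 6 ∧ Set.range (fun i => mApply M (v i)) =
            ({(0, 1), (-r, s + 1), (-r, s), (0, -1), (r, -s - 1), (r, -s)} : Set (ℤ × ℤ)) ∧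
              Int.gcd r (s + 1) = 1)) := by
  obtain ⟨b, hb⟩ := hF.exists_isWallRelation hdet
  obtain ⟨i, hi⟩ := hF.exists_range_eq hb
  obtain ⟨M, s, hM, hu, hw⟩ := exists_mApply_eq_zero_one (hF.isPrimitive (i + 1)) (v i)
  rw [hdet] at hw
  have hprim : ∀ j, IsPrimitive (mApply M (v j)) := fun j =>
    (hF.isPrimitive j).mApply (by simp [hM])
  have hgcd : ∀ t, (-r, t) ∈ Set.range (fun j => mApply M (v j)) → Int.gcd r t = 1 := by
    rintro t ⟨j, hj⟩
    simpa [IsPrimitive, hj] using hprim j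
  refine ⟨M, s, hM, by simpa [IsPrimitive, hw] using hprim i, ?_⟩
  have hrange : Set.range (fun j => mApply M (v j)) = mApply M '' Set.range v :=
    Set.range_comp (mApply M) v
  obtain ⟨hk, h⟩ | ⟨hk, h⟩ | ⟨hk, h⟩ | ⟨hk, h⟩ | ⟨hk, h⟩ := hi <;>
  · simp only [h, Set.image_insert_eq, Set.image_singleton, mApply_neg, mApply_sub, hu, hw,
      Prod.neg_mk, Prod.mk_sub_mk, neg_neg, neg_zero, zero_sub, sub_zero, sub_neg_eq_add,
      add_comm 1 s] at hrange
    simp [hk, hrange, hgcd]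

/-- a Fano polygon with r ∉ {1,2,4} all of whose edge cones have
determinant r and are R-cones (lattice length squared < r) has k ∈ {3,4,5,6}
vertices, and its vertex set is mapped by some M ∈ GL₂(ℤ) onto one of nine
explicit model vertex sets. -/
theorem classification_of_fano_with_R_cones (r : ℤ) (hr : 0 < r)
    (hr1 : r ≠ 1) (hr2 : r ≠ 2) (hr4 : r ≠ 4)
    (k : ℕ) (v : ZMod k → ℤ × ℤ)
    (hF : IsFanoCCW v)
    (hdet : ∀ i, det2 (v i) (v (i + 1)) = r)
    (hR : ∀ i, ((Int.gcd ((v (i + 1)).1 - (v i).1) ((v (i + 1)).2 - (v i).2) : ℤ)) ^ 2 < r) :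
    (k = 3 ∨ k = 4 ∨ k = 5 ∨ k = 6) ∧
      ∃ (M : Matrix (Fin 2) (Fin 2) ℤ) (s : ℤ), IsUnit M.det ∧
        ((Set.range (fun i => mApply M (v i)) =
              ({(0, 1), (-r, s - 1), (r, -s)} : Set (ℤ × ℤ)) ∧
            Int.gcd r s = 1 ∧ Int.gcd r (s - 1) = 1) ∨
         (Set.range (fun i => mApply M (v i)) =
              ({(0, 1), (-r, s), (0, -1), (r, -s)} : Set (ℤ × ℤ)) ∧
            Int.gcd r s = 1) ∨
         (Set.range (fun i => mApply M (v i)) =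
              ({(0, 1), (-r, s + 1), (0, -1), (r, -s)} : Set (ℤ × ℤ)) ∧
            Int.gcd r s = 1 ∧ Int.gcd r (s + 1) = 1) ∨
         (Set.range (fun i => mApply M (v i)) =
              ({(0, 1), (-r, s), (r, -s - 1), (r, -s)} : Set (ℤ × ℤ)) ∧
            Int.gcd r s = 1 ∧ Int.gcd r (s + 1) = 1) ∨
         (Set.range (fun i => mApply M (v i)) =
              ({(0, 1), (-r, s), (-r, s - 1), (r, -s)} : Set (ℤ × ℤ)) ∧
            Int.gcd r s = 1 ∧ Int.gcd r (s - 1) = 1) ∨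
         (Set.range (fun i => mApply M (v i)) =
              ({(0, 1), (-r, s + 1), (-r, s), (0, -1), (r, -s)} : Set (ℤ × ℤ)) ∧
            Int.gcd r s = 1 ∧ Int.gcd r (s + 1) = 1) ∨
         (Set.range (fun i => mApply M (v i)) =
              ({(0, 1), (-r, s), (-r, s - 1), (0, -1), (r, -s)} : Set (ℤ × ℤ)) ∧
            Int.gcd r s = 1 ∧ Int.gcd r (s - 1) = 1) ∨
         (Set.range (fun i => mApply M (v i)) =
              ({(0, 1), (-r, s + 1), (-r, s), (r, -s - 1), (r, -s)} : Set (ℤ × ℤ)) ∧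
            Int.gcd r s = 1 ∧ Int.gcd r (s + 1) = 1) ∨
         (Set.range (fun i => mApply M (v i)) =
              ({(0, 1), (-r, s + 1), (-r, s), (0, -1), (r, -s - 1), (r, -s)} : Set (ℤ × ℤ)) ∧
            Int.gcd r s = 1 ∧ Int.gcd r (s + 1) = 1)) := by
  obtain ⟨M, s, hM, hs, h⟩ := classification_of_fano_with_R_cones_general r k v hF hdet
  exact ⟨by omega, M, s, hM ▸ isUnit_one, by tauto⟩
end

section
/- Let r > 2 and s be integers with 1 ≤ s < r and gcd(r,s) = 1. Suppose r divides s² + 1, and suppose in addition that either r divides 2s + 1 or r divides s² + s + 1. Then r = 5 and s = 2. (This is the arithmetic content of the statement that the three cyclic quotient R-singularities 1/r(1,s), 1/r(1,r−s) and 1/r(1,r−s−1) are all isomorphic only for (r,s) = (5,2).) -/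
section CommRing

variable {R : Type*} [CommRing R]

theorem dvd_five_of_dvd_sq_add_one_of_dvd_two_mul_add_one {r s : R}
    (hsq : r ∣ s ^ 2 + 1) (hlin : r ∣ 2 * s + 1) : r ∣ 5 := by
  have five_eq : (5 : R) = 4 * (s ^ 2 + 1) - (2 * s - 1) * (2 * s + 1) := by ring
  rw [five_eq]
  exact dvd_sub (hsq.mul_left 4) (hlin.mul_left (2 * s - 1))

theorem isCoprime_sq_add_one_sq_add_self_add_one (s : R) :
    IsCoprime (s ^ 2 + 1) (s ^ 2 + s + 1) :=
  ⟨s + 1, -s, by ring⟩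

end CommRing

theorem five_two_of_three_isomorphic_R_cones_general {r s : ℤ} (hr : 1 < r)
    (h₁ : r ∣ s ^ 2 + 1) (h₂ : r ∣ 2 * s + 1 ∨ r ∣ s ^ 2 + s + 1) :
    r = 5 ∧ s ≡ 2 [ZMOD 5] := by
  rcases h₂ with hlin | hquad
  · have r_dvd_five : r ∣ 5 := dvd_five_of_dvd_sq_add_one_of_dvd_two_mul_add_one h₁ hlin
    have r_le_five : r ≤ 5 := Int.le_of_dvd (by norm_num) r_dvd_five
    obtain rfl : r = 5 := by interval_cases r <;> omega
    exact ⟨rfl, by rw [Int.ModEq]; omega⟩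
  · have r_isUnit : IsUnit r :=
      (isCoprime_sq_add_one_sq_add_self_add_one s).isUnit_of_dvd' h₁ hquad
    rcases Int.isUnit_iff.mp r_isUnit with rfl | rfl <;> omega

/-- if r > 2, 1 ≤ s < r, gcd(r,s) = 1, r ∣ s² + 1, and in addition
r ∣ 2s + 1 or r ∣ s² + s + 1, then (r,s) = (5,2). -/
theorem five_two_of_three_isomorphic_R_cones (r s : ℤ) (hr : 2 < r)
    (hs : 1 ≤ s) (hsr : s < r) (hgcd : Int.gcd r s = 1)
    (h₁ : r ∣ s ^ 2 + 1)
    (h₂ : r ∣ 2 * s + 1 ∨ r ∣ s ^ 2 + s + 1) :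
    r = 5 ∧ s = 2 := by
  obtain ⟨rfl, s_modEq⟩ := five_two_of_three_isomorphic_R_cones_general (by omega) h₁ h₂
  exact ⟨rfl, by rw [Int.ModEq] at s_modEq; omega⟩
end

section
/- Let r > s ≥ 1 be integers with gcd(r,s) = 1. If P and Q are both Fano polygons with singularity content (0, {3 × 1/r(1,s)}), then P and Q are unimodular equivalent: there exists M ∈ GL₂(ℤ) mapping the vertex set of P onto the vertex set of Q (equivalently, mapping P onto Q). -/
/-- A Fano polygon with vertices `v : ZMod k → ℤ × ℤ` has singularity content
(0, {k × 1/r(1,s)}): the cone spanned by (0,1) and (r,−s) is an R-cone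
(its lattice length gcd(r, s+1) satisfies gcd(r, s+1)² < r), and every edge cone,
i.e. every pair of adjacent vertices, is mapped by some M ∈ GL₂(ℤ) onto
{(0,1), (r,−s)}. -/
def HasSingContent (r s : ℤ) {k : ℕ} (v : ZMod k → ℤ × ℤ) : Prop :=
  ((Int.gcd r (s + 1) : ℤ)) ^ 2 < r ∧
    ∀ i : ZMod k, ∃ M : Matrix (Fin 2) (Fin 2) ℤ, IsUnit M.det ∧
      ({mApply M (v i), mApply M (v (i + 1))} : Set (ℤ × ℤ)) = {(0, 1), (r, -s)}

lemma range_zmod_three {α : Type*} (P : ZMod 3 → α) : Set.range P = {P 0, P 1, P 2} := by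
  have huniv : (Set.univ : Set (ZMod 3)) = {0, 1, 2} := by
    ext i
    revert i
    decide
  rw [← Set.image_univ, huniv, Set.image_insert_eq, Set.image_pair]

section MApply

variable (M N : Matrix (Fin 2) (Fin 2) ℤ) (u v : ℤ × ℤ)

lemma mApply_one : mApply 1 u = u := by
  simp [mApply]

lemma mApply_zero : mApply M 0 = 0 := by
  simp [mApply]

lemma mApply_add : mApply M (u + v) = mApply M u + mApply M v := by
  ext <;> simp only [mApply, Prod.fst_add, Prod.snd_add] <;> ring

lemma mApply_mul : mApply (M * N) u = mApply M (mApply N u) := by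
  ext <;> simp only [mApply, Matrix.mul_apply, Fin.sum_univ_two] <;> ring

lemma det2_mApply : det2 (mApply M u) (mApply M v) = M.det * det2 u v := by
  simp only [det2, mApply, Matrix.det_fin_two]
  ring

end MApply

lemma det2_swap (u v : ℤ × ℤ) : det2 v u = -det2 u v := by
  simp only [det2]
  ring

lemma det2_smul_add_det2_smul_add_det2_smul (a b c : ℤ × ℤ) :
    det2 b c • a + det2 c a • b + det2 a b • c = 0 := by
  ext <;>
    simp only [det2, Prod.fst_add, Prod.snd_add, Prod.smul_fst, Prod.smul_snd, smul_eq_mul,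
      Prod.fst_zero, Prod.snd_zero] <;>
    ring

lemma add_add_eq_zero_of_det2_eq {d : ℤ} (hd : d ≠ 0) {a b c : ℤ × ℤ}
    (hab : det2 a b = d) (hbc : det2 b c = d) (hca : det2 c a = d) : a + b + c = 0 := by
  have h := det2_smul_add_det2_smul_add_det2_smul a b c
  rw [hab, hbc, hca, ← smul_add, ← smul_add] at h
  exact (smul_eq_zero.mp h).resolve_left hd

/-- Two sets of lattice points are unimodular equivalent if some element of `GL₂(ℤ)` maps the first
onto the second. It serves both for vertex sets and for edge cones, a cone being encoded by the
unordered pair of its generators. -/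
def UnimodularEquiv (S T : Set (ℤ × ℤ)) : Prop :=
  ∃ M : Matrix (Fin 2) (Fin 2) ℤ, IsUnit M.det ∧ mApply M '' S = T

namespace UnimodularEquiv

lemma symm {S T : Set (ℤ × ℤ)} (h : UnimodularEquiv S T) : UnimodularEquiv T S := by
  obtain ⟨M, hM, rfl⟩ := h
  refine ⟨M⁻¹, M.isUnit_nonsing_inv_det hM, ?_⟩
  simp only [Set.image_image, ← mApply_mul, M.nonsing_inv_mul hM, mApply_one, Set.image_id']

lemma trans {S T U : Set (ℤ × ℤ)} (hST : UnimodularEquiv S T) (hTU : UnimodularEquiv T U) :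
    UnimodularEquiv S U := by
  obtain ⟨M, hM, rfl⟩ := hST
  obtain ⟨N, hN, rfl⟩ := hTU
  refine ⟨N * M, ?_, ?_⟩
  · rw [Matrix.det_mul]
    exact hN.mul hM
  · simp only [Set.image_image, mApply_mul]

lemma abs_det2_eq {u v e f : ℤ × ℤ} (h : UnimodularEquiv {u, v} {e, f}) :
    |det2 u v| = |det2 e f| := by
  obtain ⟨M, hM, hMuv⟩ := h
  have hinv : |det2 (mApply M u) (mApply M v)| = |det2 u v| := by
    rw [det2_mApply, abs_mul, Int.isUnit_iff_abs_eq.mp hM, one_mul]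
  rw [Set.image_pair] at hMuv
  rcases Set.pair_eq_pair_iff.mp hMuv with ⟨hu, hv⟩ | ⟨hu, hv⟩
  · rw [← hinv, hu, hv]
  · rw [← hinv, hu, hv, det2_swap, abs_neg]

lemma insert_of_add_eq_zero {a b c a' b' c' : ℤ × ℤ} (h : UnimodularEquiv {b, c} {b', c'})
    (hsum : a + b + c = 0) (hsum' : a' + b' + c' = 0) :
    UnimodularEquiv {a, b, c} {a', b', c'} := by
  obtain ⟨M, hM, hMbc⟩ := h
  have hpair : mApply M b + mApply M c = b' + c' := by
    rw [Set.image_pair] at hMbc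
    rcases Set.pair_eq_pair_iff.mp hMbc with ⟨hb, hc⟩ | ⟨hb, hc⟩
    · rw [hb, hc]
    · rw [hb, hc, add_comm]
  have hMa : mApply M a = a' := by
    apply add_right_cancel (b := b' + c')
    rw [← add_assoc a', hsum', ← hpair, ← mApply_add, ← mApply_add, ← add_assoc, hsum, mApply_zero]
  exact ⟨M, hM, by rw [Set.image_insert_eq, hMa, hMbc]⟩

end UnimodularEquiv

/-- The triangle with vertices `P` winds counterclockwise around the origin and each of its edge
cones is equivalent to the cone on `e` and `f`. -/
structure IsTriangleWithCones (e f : ℤ × ℤ) (P : ZMod 3 → ℤ × ℤ) : Prop where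
  det2_pos : ∀ i, 0 < det2 (P i) (P (i + 1))
  edge_equiv : ∀ i, UnimodularEquiv {P i, P (i + 1)} {e, f}

namespace IsTriangleWithCones

variable {e f : ℤ × ℤ} {P : ZMod 3 → ℤ × ℤ}

lemma det2_eq (hP : IsTriangleWithCones e f P) (i : ZMod 3) :
    det2 (P i) (P (i + 1)) = |det2 e f| := by
  rw [← (hP.edge_equiv i).abs_det2_eq, abs_of_pos (hP.det2_pos i)]

lemma sum_vertices_eq_zero (hP : IsTriangleWithCones e f P) : P 0 + P 1 + P 2 = 0 := by
  have hdet : |det2 e f| ≠ 0 := by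
    rw [← hP.det2_eq 0]
    exact (hP.det2_pos 0).ne'
  exact add_add_eq_zero_of_det2_eq hdet (hP.det2_eq 0) (hP.det2_eq 1) (hP.det2_eq 2)

end IsTriangleWithCones

lemma HasSingContent.isTriangleWithCones {r s : ℤ} {P : ZMod 3 → ℤ × ℤ}
    (h : HasSingContent r s P) (hP : IsFanoCCW P) : IsTriangleWithCones (0, 1) (r, -s) P where
  det2_pos := hP.2.2.1
  edge_equiv i := by simpa only [UnimodularEquiv, Set.image_pair] using h.2 i

theorem fano_three_singularities_unique_general {e f : ℤ × ℤ} {P Q : ZMod 3 → ℤ × ℤ}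
    (hP : IsTriangleWithCones e f P) (hQ : IsTriangleWithCones e f Q) :
    UnimodularEquiv (Set.range P) (Set.range Q) := by
  rw [range_zmod_three, range_zmod_three]
  have hedge : UnimodularEquiv {P 1, P 2} {Q 1, Q 2} :=
    (hP.edge_equiv 1).trans (hQ.edge_equiv 1).symm
  exact hedge.insert_of_add_eq_zero hP.sum_vertices_eq_zero hQ.sum_vertices_eq_zero

/-- for r > s ≥ 1 with gcd(r,s) = 1, any two Fano polygons with
singularity content (0, {3 × 1/r(1,s)}) are unimodular equivalent: some M ∈ GL₂(ℤ)
maps the vertex set of the first onto the vertex set of the second. -/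
theorem fano_three_singularities_unique (r s : ℤ) (hs : 1 ≤ s) (hsr : s < r)
    (hgcd : Int.gcd r s = 1)
    (P Q : ZMod 3 → ℤ × ℤ)
    (hP : IsFanoCCW P ∧ HasSingContent r s P)
    (hQ : IsFanoCCW Q ∧ HasSingContent r s Q) :
    ∃ M : Matrix (Fin 2) (Fin 2) ℤ, IsUnit M.det ∧
      Set.range (fun i => mApply M (P i)) = Set.range Q := by
  obtain ⟨M, hM, h⟩ := fano_three_singularities_unique_general
    (hP.2.isTriangleWithCones hP.1) (hQ.2.isTriangleWithCones hQ.1)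
  exact ⟨M, hM, (Set.range_comp (mApply M) P).trans h⟩
end
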